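/- arXiv:2306.00654 — 6 statements merged into one kernel-verified Lean document; each statement's English description precedes it below -/
import Mathlib

section
/- Let 1 ≤ k ≤ d. A linear map L : M_d(ℂ) → M_d(ℂ) is k-positive if and only if for every orthonormal subset {v_1, …, v_k} of ℂ^d, the bipartite matrix C_k^v(L) := Σ_{i,j=1}^k |i⟩⟨j| ⊗ L(|v_i⟩⟨v_j|) ∈ M_k(ℂ) ⊗ M_d(ℂ) is positive semidefinite. -/
set_option linter.unusedSectionVars false

open Matrix
open scoped ComplexOrder

noncomputable section

/-- The ampliation `id_{M_k} ⊗ L` of a map `L` applied to a bipartite matrix, blockwise. -/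
def idTensor {k m n : ℕ} (L : Matrix (Fin m) (Fin m) ℂ →ₗ[ℂ] Matrix (Fin n) (Fin n) ℂ)
    (X : Matrix (Fin k × Fin m) (Fin k × Fin m) ℂ) : Matrix (Fin k × Fin n) (Fin k × Fin n) ℂ :=
  Matrix.of fun p q => L (Matrix.of fun a b => X (p.1, a) (q.1, b)) p.2 q.2

/-- `L` is `k`-positive if `id_{M_k} ⊗ L` sends positive semidefinite matrices to positive
semidefinite matrices. -/
def IsKPositive {m n : ℕ} (k : ℕ)
    (L : Matrix (Fin m) (Fin m) ℂ →ₗ[ℂ] Matrix (Fin n) (Fin n) ℂ) : Prop :=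
  ∀ X : Matrix (Fin k × Fin m) (Fin k × Fin m) ℂ, X.PosSemidef → (idTensor L X).PosSemidef

/-- The linear map `L^{(d)}_{p,q}(Z) = (1-p-q) (Tr Z / d) I_d + p Z + q Zᵀ`. -/
def Lmap (d : ℕ) (p q : ℝ) :
    Matrix (Fin d) (Fin d) ℂ →ₗ[ℂ] Matrix (Fin d) (Fin d) ℂ :=
  ((((1 - p - q : ℝ) : ℂ) / (d : ℂ)) •
      (Matrix.traceLinearMap (Fin d) ℂ ℂ).smulRight (1 : Matrix (Fin d) (Fin d) ℂ))
    + ((p : ℝ) : ℂ) • LinearMap.id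
    + ((q : ℝ) : ℂ) • (Matrix.transposeLinearEquiv (Fin d) (Fin d) ℂ ℂ).toLinearMap

/-- The maximally entangled vector `|Ω_d⟩ = (1/√d) ∑_j |jj⟩`. -/
def omegaVec (d : ℕ) : Fin d × Fin d → ℂ :=
  fun p => if p.1 = p.2 then ((1 / Real.sqrt d : ℝ) : ℂ) else 0

/-- The flip operator `F_d = ∑_{i,j} |ij⟩⟨ji|`. -/
def flipMatrix (d : ℕ) : Matrix (Fin d × Fin d) (Fin d × Fin d) ℂ :=
  Matrix.of fun p q => if p.1 = q.2 ∧ p.2 = q.1 then 1 else 0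

/-- The orthogonally invariant operators
`ρ^{(d)}_{a,b} = ((1-a-b)/d²) I + a |Ω_d⟩⟨Ω_d| + (b/d) F_d`. -/
def rho (d : ℕ) (a b : ℝ) : Matrix (Fin d × Fin d) (Fin d × Fin d) ℂ :=
  ((((1 - a - b : ℝ) : ℂ) / ((d : ℂ) ^ 2)) • (1 : Matrix (Fin d × Fin d) (Fin d × Fin d) ℂ))
    + (((a : ℝ) : ℂ) • Matrix.vecMulVec (omegaVec d) (star (omegaVec d)))
    + ((((b : ℝ) : ℂ) / (d : ℂ)) • flipMatrix d)

/-- `Sch_k`: finite sums of rank-one operators `|ξ⟩⟨ξ|` with Schmidt rank `SR(ξ) ≤ k`,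
where `SR(ξ)` is the rank of the `d_A × d_B` coefficient matrix of `ξ ∈ ℂ^{d_A} ⊗ ℂ^{d_B}`. -/
def SchmidtSet (dA dB k : ℕ) : Set (Matrix (Fin dA × Fin dB) (Fin dA × Fin dB) ℂ) :=
  {X | ∃ (N : ℕ) (ξ : Fin N → (Fin dA × Fin dB → ℂ)),
    (∀ i, (Matrix.of fun a b => ξ i (a, b)).rank ≤ k) ∧
    X = ∑ i, Matrix.vecMulVec (ξ i) (star (ξ i))}

/-- Any `k` vectors of `ℂ^(k+m)` are combinations of `k` orthonormal ones. -/
lemma exists_orthonormal_combination {k m : ℕ} (w : Fin k → (Fin (k + m) → ℂ)) :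
    ∃ (v : Fin k → (Fin (k + m) → ℂ)) (c : Matrix (Fin k) (Fin k) ℂ),
      (∀ i j, star (v i) ⬝ᵥ v j = if i = j then 1 else 0) ∧
      ∀ i, w i = ∑ j, c i j • v j := by
  let E := EuclideanSpace ℂ (Fin (k + m))
  let f : Fin (k + m) → E := Fin.append (fun i => WithLp.toLp 2 (w i)) (fun _ => 0)
  have hE : Module.finrank ℂ E = Fintype.card (Fin (k + m)) := by simp [E]
  let b := InnerProductSpace.gramSchmidtOrthonormalBasis hE f
  refine ⟨fun j => WithLp.ofLp (b (Fin.castAdd m j)),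
    Matrix.of fun i j => inner ℂ (b (Fin.castAdd m j)) (f (Fin.castAdd m i)), ?_, ?_⟩
  · intro i j
    have h := orthonormal_iff_ite.1 b.orthonormal (Fin.castAdd m i) (Fin.castAdd m j)
    rw [EuclideanSpace.inner_eq_star_dotProduct, dotProduct_comm] at h
    rw [h]
    simp
  · intro i
    have h := b.sum_repr' (f (Fin.castAdd m i))
    rw [Fin.sum_univ_add] at h
    have h0 : ∀ j : Fin m, inner ℂ (b (Fin.natAdd k j)) (f (Fin.castAdd m i)) = 0 := by
      intro j
      apply InnerProductSpace.gramSchmidtOrthonormalBasis_inv_triangular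
      simp only [Fin.lt_def, Fin.val_castAdd, Fin.val_natAdd]
      omega
    simp only [h0, zero_smul, Finset.sum_const_zero, add_zero] at h
    have h' := congrArg WithLp.ofLp h
    rw [WithLp.ofLp_sum] at h'
    have hf : (f (Fin.castAdd m i)).ofLp = w i := by simp [f]
    exact (h'.trans hf).symm

/-- `idTensor L` commutes with finite sums. -/
lemma idTensor_sum {k m n : ℕ} {ι : Type*} (s : Finset ι)
    (L : Matrix (Fin m) (Fin m) ℂ →ₗ[ℂ] Matrix (Fin n) (Fin n) ℂ)
    (X : ι → Matrix (Fin k × Fin m) (Fin k × Fin m) ℂ) :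
    idTensor L (∑ r ∈ s, X r) = ∑ r ∈ s, idTensor L (X r) := by
  ext p q
  have h : (Matrix.of fun a b => (∑ r ∈ s, X r) (p.1, a) (q.1, b)) =
      ∑ r ∈ s, Matrix.of fun a b => X r (p.1, a) (q.1, b) := by
    ext a b
    simp [Matrix.sum_apply]
  have h' := congrFun (congrFun (congrArg L h) p.2) q.2
  rw [map_sum, Matrix.sum_apply] at h'
  rw [Matrix.sum_apply]
  exact h'

/-- `idTensor L` on a rank-one operator. -/
lemma idTensor_vecMulVec {k m n : ℕ}
    (L : Matrix (Fin m) (Fin m) ℂ →ₗ[ℂ] Matrix (Fin n) (Fin n) ℂ)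
    (w : Fin k → Fin m → ℂ) :
    idTensor L (Matrix.vecMulVec (fun p : Fin k × Fin m => w p.1 p.2)
      (star fun p : Fin k × Fin m => w p.1 p.2)) =
    Matrix.of fun p q : Fin k × Fin n =>
          L (Matrix.vecMulVec (w p.1) (star (w q.1))) p.2 q.2 := rfl

/-- Change of vectors in the generalized Choi matrix is a congruence. -/
lemma choi_congr {k m n : ℕ}
    (L : Matrix (Fin m) (Fin m) ℂ →ₗ[ℂ] Matrix (Fin n) (Fin n) ℂ)
    (w v : Fin k → Fin m → ℂ) (c : Matrix (Fin k) (Fin k) ℂ)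
    (h : ∀ i, w i = ∑ j, c i j • v j) :
    (Matrix.of fun p q : Fin k × Fin n =>
          L (Matrix.vecMulVec (w p.1) (star (w q.1))) p.2 q.2) =
    (Matrix.kroneckerMap (· * ·) c (1 : Matrix (Fin n) (Fin n) ℂ)) *
    (Matrix.of fun p q : Fin k × Fin n =>
          L (Matrix.vecMulVec (v p.1) (star (v q.1))) p.2 q.2) *
    (Matrix.kroneckerMap (· * ·) c (1 : Matrix (Fin n) (Fin n) ℂ))ᴴ := by
  ext ⟨i, a⟩ ⟨i', a'⟩
  have e : Matrix.vecMulVec (w i) (star (w i')) =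
      ∑ j', ∑ j, (c i j * star (c i' j')) • Matrix.vecMulVec (v j) (star (v j')) := by
    ext x y
    simp only [h, Matrix.vecMulVec_apply, Matrix.sum_apply, Matrix.smul_apply, Finset.sum_apply,
      Pi.star_apply, Pi.smul_apply, smul_eq_mul, star_sum, star_mul', Finset.sum_mul_sum]
    rw [Finset.sum_comm]
    refine Finset.sum_congr rfl fun _ _ => Finset.sum_congr rfl fun _ _ => ?_
    ring
  simp only [Matrix.of_apply, e, map_sum, map_smul, Matrix.sum_apply, Matrix.smul_apply,
    Matrix.mul_apply, Fintype.sum_prod_type, Matrix.kroneckerMap_apply,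
    Matrix.conjTranspose_apply, Matrix.one_apply]
  simp [Finset.sum_mul, mul_right_comm, apply_ite (starRingEnd ℂ)]

/-- (Tomiyama's criterion.) For `1 ≤ k ≤ d`, a linear map
`L : M_d → M_d` is `k`-positive iff for every orthonormal subset `{v_1,…,v_k} ⊆ ℂ^d` the
matrix `C_k^v(L) = ∑_{i,j} |i⟩⟨j| ⊗ L(|v_i⟩⟨v_j|)` is positive semidefinite. -/
theorem isKPositive_iff_orthonormal_choi {d k : ℕ} (hk : 1 ≤ k) (hkd : k ≤ d)
    (L : Matrix (Fin d) (Fin d) ℂ →ₗ[ℂ] Matrix (Fin d) (Fin d) ℂ) :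
    IsKPositive k L ↔
      ∀ v : Fin k → (Fin d → ℂ),
        (∀ i j, star (v i) ⬝ᵥ v j = if i = j then 1 else 0) →
        (Matrix.of fun p q : Fin k × Fin d =>
          L (Matrix.vecMulVec (v p.1) (star (v q.1))) p.2 q.2).PosSemidef := by
  constructor
  · intro h v _
    rw [← idTensor_vecMulVec]
    exact h _ (Matrix.posSemidef_vecMulVec_self_star _)
  · intro h X hX
    obtain ⟨m, rfl⟩ := Nat.exists_eq_add_of_le hkd
    obtain ⟨N, B, rfl⟩ := Matrix.posSemidef_iff_eq_sum_vecMulVec.1 hX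
    rw [idTensor_sum]
    refine Matrix.posSemidef_sum _ fun r _ => ?_
    have e := idTensor_vecMulVec L (fun i a => B r (i, a))
    simp only [Prod.mk.eta] at e
    rw [e]
    obtain ⟨v, c, hv, hw⟩ := exists_orthonormal_combination (fun i a => B r (i, a))
    rw [choi_congr L _ v c hw]
    exact (h v hv).mul_mul_conjTranspose_same _

end
end

section
/- Let 1 ≤ k ≤ d. Then the minimum of Σ_{j,j'=1}^k |⟨v_j, conj(v_{j'})⟩|² over all orthonormal subsets {v_1, …, v_k} of ℂ^d equals max(2k − d, 0). That is: (i) for every orthonormal subset {v_1,…,v_k} ⊂ ℂ^d one has Σ_{j,j'=1}^k |⟨v_j, conj(v_{j'})⟩|² ≥ max(2k − d, 0), and (ii) there exists an orthonormal subset attaining equality. -/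
set_option linter.unusedSectionVars false

open Matrix
open scoped ComplexOrder

noncomputable section

/-- Lower bound via `tr((1-P)(1-conj P)) ≥ 0`. -/
lemma overlap_lower {d k : ℕ} (v : Fin k → (Fin d → ℂ))
    (hv : ∀ i j, star (v i) ⬝ᵥ v j = if i = j then 1 else 0) :
    max (2 * (k : ℝ) - (d : ℝ)) 0 ≤
      ∑ j : Fin k, ∑ j' : Fin k, Complex.normSq (star (v j) ⬝ᵥ star (v j')) := by
  refine max_le ?_ (Finset.sum_nonneg fun i _ => Finset.sum_nonneg fun j _ => Complex.normSq_nonneg _)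
  let W : Matrix (Fin k) (Fin d) ℂ := Matrix.of v
  have hW : W.map star * Wᵀ = 1 := by
    ext i j
    have := hv i j
    rw [Matrix.one_apply, ← this]
    rfl
  have hW2 : W * Wᴴ = 1 := by
    have := congrArg Matrix.transpose hW
    rw [Matrix.transpose_mul, Matrix.transpose_transpose, Matrix.transpose_one] at this
    exact this
  set B := W.map star with hB
  have hBH : Bᴴ = Wᵀ := by
    ext i j; simp [B]
  have hWH : Wᴴ = Bᵀ := by
    ext i j; simp [B]
  -- frobenius norm as a trace
  have hfro : ∀ {m n : ℕ} (M : Matrix (Fin m) (Fin n) ℂ),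
      (M * Mᴴ).trace = ((∑ i, ∑ j, Complex.normSq (M i j) : ℝ) : ℂ) := by
    intro m n M
    simp [Matrix.trace, Matrix.mul_apply, Complex.mul_conj]
  set P : Matrix (Fin d) (Fin d) ℂ := Wᵀ * B with hP
  set Q : Matrix (Fin d) (Fin d) ℂ := Wᴴ * W with hQ
  have hPP : P * P = P := by
    rw [hP, Matrix.mul_assoc, ← Matrix.mul_assoc B, hW, Matrix.one_mul]
  have hQQ : Q * Q = Q := by
    rw [hQ, Matrix.mul_assoc, ← Matrix.mul_assoc W, hW2, Matrix.one_mul]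
  have hPH : Pᴴ = P := by
    rw [hP, Matrix.conjTranspose_mul, hBH, ← hBH, Matrix.conjTranspose_conjTranspose]
  have hQH : Qᴴ = Q := by
    rw [hQ, Matrix.conjTranspose_mul, Matrix.conjTranspose_conjTranspose]
  have htP : P.trace = k := by
    rw [hP, Matrix.trace_mul_comm, hW]; simp
  have htQ : Q.trace = k := by
    rw [hQ, Matrix.trace_mul_comm, hW2]; simp
  have h1 := hfro (B * Wᴴ)
  have h2 := hfro ((1 - P) * (1 - Q))
  have e1 : (B * Wᴴ * (B * Wᴴ)ᴴ).trace = (P * Q).trace := by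
    rw [Matrix.conjTranspose_mul, Matrix.conjTranspose_conjTranspose, hBH, hP, hQ,
      Matrix.trace_mul_comm (Wᵀ * B), ← Matrix.mul_assoc, Matrix.trace_mul_comm]
    rw [Matrix.trace_mul_comm (Wᴴ * W)]
    simp only [Matrix.mul_assoc]
  have e2 : ((1 - P) * (1 - Q) * ((1 - P) * (1 - Q))ᴴ).trace = d - 2 * k + (P * Q).trace := by
    rw [Matrix.conjTranspose_mul, Matrix.conjTranspose_sub, Matrix.conjTranspose_sub, hPH, hQH,
      Matrix.conjTranspose_one]
    have a : (1 - P) * (1 - P) = 1 - P := by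
      rw [sub_mul, mul_sub, mul_sub, hPP]; simp
    have b : (1 - Q) * (1 - Q) = 1 - Q := by
      rw [sub_mul, mul_sub, mul_sub, hQQ]; simp
    rw [Matrix.mul_assoc, Matrix.trace_mul_comm, ← Matrix.mul_assoc, b, Matrix.mul_assoc, a,
      Matrix.trace_mul_comm]
    rw [sub_mul, mul_sub, mul_sub]
    simp [htP, htQ]
    ring
  rw [e1] at h1
  rw [e2, h1] at h2
  have h3 : (d : ℝ) - 2 * k + ∑ i, ∑ j, Complex.normSq ((B * Wᴴ) i j) =
      ∑ i, ∑ j, Complex.normSq (((1 - P) * (1 - Q)) i j) := by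
    exact_mod_cast h2
  have h4 : 0 ≤ ∑ i, ∑ j, Complex.normSq (((1 - P) * (1 - Q)) i j) :=
    Finset.sum_nonneg fun i _ => Finset.sum_nonneg fun j _ => Complex.normSq_nonneg _
  have h5 : ∑ j : Fin k, ∑ j' : Fin k, Complex.normSq (star (v j) ⬝ᵥ star (v j')) =
    ∑ i, ∑ j, Complex.normSq ((B * Wᴴ) i j) := rfl
  rw [h5]
  linarith

/-- The extremal orthonormal family. -/
def extremalVec {d k : ℕ} (hkd : k ≤ d) (j : Fin k) : Fin d → ℂ :=
  if h : k + j < d then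
    Pi.single ⟨j, j.2.trans_le hkd⟩ ((Real.sqrt 2)⁻¹ : ℂ)
      + Pi.single ⟨k + j, h⟩ (Complex.I * (Real.sqrt 2)⁻¹ : ℂ)
  else Pi.single ⟨j, j.2.trans_le hkd⟩ 1

lemma sqrt_two_inv_mul : ((Real.sqrt 2 : ℂ))⁻¹ * ((Real.sqrt 2 : ℂ))⁻¹ = 1 / 2 := by
  rw [← mul_inv, ← Complex.ofReal_mul, Real.mul_self_sqrt (by norm_num)]
  norm_num

lemma extremal_ortho {d k : ℕ} (hkd : k ≤ d) (i j : Fin k) :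
    star (extremalVec hkd i) ⬝ᵥ extremalVec hkd j = if i = j then 1 else 0 := by
  have hi := i.2
  have hj := j.2
  have e0 : k ≠ 0 := by omega
  have e1 : ¬ (k + (i : ℕ) = j) := by omega
  have e2 : ¬ ((i : ℕ) = k + j) := by omega
  have hs := sqrt_two_inv_mul
  unfold extremalVec
  by_cases hij : i = j
  · subst hij
    rw [if_pos rfl]
    split_ifs <;> simp [dotProduct_add, add_dotProduct, Pi.single_apply, ← Pi.single_star, e1, e2, e0]
    linear_combination 2 * hs - ((Real.sqrt 2 : ℂ))⁻¹ * ((Real.sqrt 2 : ℂ))⁻¹ * Complex.I_mul_I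
  · have e3 : ¬ ((i : ℕ) = j) := fun h => hij (Fin.ext h)
    have e4 : ¬ ((j : ℕ) = i) := fun h => e3 h.symm
    split_ifs <;> simp [dotProduct_add, add_dotProduct, Pi.single_apply, ← Pi.single_star, e1, e2, e3, e4] <;> omega

lemma extremal_conj {d k : ℕ} (hkd : k ≤ d) (i j : Fin k) :
    star (extremalVec hkd i) ⬝ᵥ star (extremalVec hkd j) =
      if i = j then (if k + (i : ℕ) < d then 0 else 1) else 0 := by
  have hi := i.2
  have hj := j.2
  have e0 : k ≠ 0 := by omega
  have e1 : ¬ (k + (i : ℕ) = j) := by omega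
  have e2 : ¬ ((i : ℕ) = k + j) := by omega
  have hs := sqrt_two_inv_mul
  unfold extremalVec
  by_cases hij : i = j
  · subst hij
    rw [if_pos rfl]
    split_ifs <;> simp [dotProduct_add, add_dotProduct, Pi.single_apply, ← Pi.single_star, e1, e2, e0]
    linear_combination ((Real.sqrt 2 : ℂ))⁻¹ * ((Real.sqrt 2 : ℂ))⁻¹ * Complex.I_mul_I
  · have e3 : ¬ ((i : ℕ) = j) := fun h => hij (Fin.ext h)
    have e4 : ¬ ((j : ℕ) = i) := fun h => e3 h.symm
    split_ifs <;> simp [dotProduct_add, add_dotProduct, Pi.single_apply, ← Pi.single_star, e1, e2, e3, e4] <;> omega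

lemma extremal_count {d k : ℕ} (hkd : k ≤ d) :
    ∑ i ∈ Finset.range k, (if k + i < d then (0 : ℝ) else 1) = max (2 * (k : ℝ) - (d : ℝ)) 0 := by
  have h : ∀ n ≤ k, ∑ i ∈ Finset.range n, (if k + i < d then (0 : ℝ) else 1)
      = max ((k : ℝ) + n - d) 0 := by
    intro n hn
    induction n with
    | zero =>
      have : (k : ℝ) ≤ d := by exact_mod_cast hkd
      simp [this]
    | succ n ih =>
      rw [Finset.sum_range_succ, ih (by omega)]
      push_cast
      split_ifs with h
      · have : (k : ℝ) + n + 1 ≤ d := by exact_mod_cast h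
        rw [max_eq_right (by linarith), max_eq_right (by linarith)]; simp
      · have : (d : ℝ) ≤ k + n := by exact_mod_cast not_lt.mp h
        rw [max_eq_left (by linarith), max_eq_left (by linarith)]; ring
  rw [h k le_rfl]; congr 1; ring

/-- For `1 ≤ k ≤ d`, the minimum of `∑_{j,j'} |⟨v_j, conj(v_{j'})⟩|²` over
all orthonormal subsets `{v_1,…,v_k} ⊆ ℂ^d` equals `max (2k - d) 0`. -/
theorem min_conjugate_overlap {d k : ℕ} (hk : 1 ≤ k) (hkd : k ≤ d) :
    IsLeast {s : ℝ | ∃ v : Fin k → (Fin d → ℂ),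
        (∀ i j, star (v i) ⬝ᵥ v j = if i = j then 1 else 0) ∧
        s = ∑ j : Fin k, ∑ j' : Fin k, Complex.normSq (star (v j) ⬝ᵥ star (v j'))}
      (max (2 * (k : ℝ) - (d : ℝ)) 0) := by
  refine ⟨⟨extremalVec hkd, extremal_ortho hkd, ?_⟩, ?_⟩
  · rw [← extremal_count hkd, ← Fin.sum_univ_eq_sum_range (fun i => if k + i < d then (0 : ℝ) else 1)]
    refine Finset.sum_congr rfl fun i _ => ?_
    rw [Finset.sum_eq_single i]
    · rw [extremal_conj]; split_ifs <;> simp_all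
    · intro j _ hj
      rw [extremal_conj, if_neg (Ne.symm hj)]; simp
    · simp
  · rintro s ⟨v, hv, rfl⟩
    exact overlap_lower v hv

end
end

section
/- Let d ≥ 2 and p, q ∈ ℝ. The map L^{(d)}_{p,q} is positive (i.e. 1-positive) if and only if p − (d−1)q ≤ 1, q − (d−1)p ≤ 1, and −1/(d−1) ≤ p + q ≤ 1. -/
set_option linter.unusedSectionVars false

open Matrix
open scoped ComplexOrder

noncomputable section

/-- The scalar form of the output on a vector. -/
lemma aux_quad {d : ℕ} (p q : ℝ) (Z : Matrix (Fin d) (Fin d) ℂ) (y : Fin d → ℂ) :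
    star y ⬝ᵥ (Lmap d p q Z *ᵥ y) =
      (((1 - p - q : ℝ) : ℂ) / (d : ℂ)) * Z.trace * (star y ⬝ᵥ y)
        + (p : ℂ) * (star y ⬝ᵥ (Z *ᵥ y)) + (q : ℂ) * (star y ⬝ᵥ (Zᵀ *ᵥ y)) := by
  simp [Lmap, Matrix.add_mulVec, Matrix.smul_mulVec, dotProduct_add, dotProduct_smul, mul_assoc]

lemma aux_vec {d : ℕ} (p q : ℝ) (h : IsKPositive 1 (Lmap d p q)) (x y : Fin d → ℂ) :
    0 ≤ (((1 - p - q : ℝ) : ℂ) / (d : ℂ)) * (x ⬝ᵥ star x) * (star y ⬝ᵥ y)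
        + (p : ℂ) * ((star x ⬝ᵥ y) * (star y ⬝ᵥ x))
        + (q : ℂ) * ((x ⬝ᵥ y) * (star y ⬝ᵥ star x)) := by
  have hZ : (vecMulVec x (star x)).PosSemidef := posSemidef_vecMulVec_self_star x
  have h1 := h ((vecMulVec x (star x)).submatrix Prod.snd Prod.snd) (hZ.submatrix _)
  have h2 := h1.submatrix (fun a : Fin d => ((0 : Fin 1), a))
  have h3 : (idTensor (Lmap d p q) ((vecMulVec x (star x)).submatrix
      (Prod.snd : Fin 1 × Fin d → Fin d) Prod.snd)).submatrix
      (fun a : Fin d => ((0 : Fin 1), a)) (fun a : Fin d => ((0 : Fin 1), a))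
      = Lmap d p q (vecMulVec x (star x)) := rfl
  rw [h3] at h2
  have h4 := h2.dotProduct_mulVec_nonneg y
  rw [aux_quad] at h4
  simpa [Matrix.trace_vecMulVec, Matrix.transpose_vecMulVec, Matrix.vecMulVec_mulVec,
    dotProduct_smul] using h4

lemma aux_sqrt {d : ℕ} {Z : Matrix (Fin d) (Fin d) ℂ} (hZ : Z.PosSemidef) :
    ∃ B : Matrix (Fin d) (Fin d) ℂ, Z = Bᴴ * B := by
  open scoped MatrixOrder in
  exact CStarAlgebra.nonneg_iff_eq_star_mul_self.mp hZ.nonneg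

/-- A positive semidefinite matrix is bounded by its trace. -/
lemma aux_le_trace {d : ℕ} {Z : Matrix (Fin d) (Fin d) ℂ} (hZ : Z.PosSemidef) (y : Fin d → ℂ) :
    star y ⬝ᵥ (Z *ᵥ y) ≤ Z.trace * (star y ⬝ᵥ y) := by
  obtain ⟨B, rfl⟩ := aux_sqrt hZ
  have e1 : star y ⬝ᵥ ((Bᴴ * B) *ᵥ y) = ((∑ i, ‖(B *ᵥ y) i‖ ^ 2 : ℝ) : ℂ) := by
    rw [← Matrix.mulVec_mulVec, Matrix.dotProduct_mulVec, ← Matrix.star_mulVec]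
    simp [dotProduct, Complex.conj_mul']
  have e2 : (Bᴴ * B).trace = ((∑ i, ∑ j, ‖B i j‖ ^ 2 : ℝ) : ℂ) := by
    rw [Finset.sum_comm]
    simp [Matrix.trace, Matrix.mul_apply, Complex.conj_mul']
  have e3 : star y ⬝ᵥ y = ((∑ j, ‖y j‖ ^ 2 : ℝ) : ℂ) := by
    simp [dotProduct, Complex.conj_mul']
  rw [e1, e2, e3, ← Complex.ofReal_mul, Complex.real_le_real, Finset.sum_mul]
  refine Finset.sum_le_sum fun i _ => ?_
  calc ‖(B *ᵥ y) i‖ ^ 2 ≤ (∑ j, ‖B i j‖ * ‖y j‖) ^ 2 := by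
        gcongr
        refine (norm_sum_le Finset.univ (fun j => B i j * y j)).trans (le_of_eq ?_)
        simp
    _ ≤ _ := Finset.sum_mul_sq_le_sq_mul_sq _ _ _

lemma aux_real {c p q s t m : ℝ} (hc : 0 ≤ c) (hp : 0 ≤ c + p) (hq : 0 ≤ c + q)
    (hpq : 0 ≤ c + p + q) (hs : 0 ≤ s) (hsm : s ≤ m) (ht : 0 ≤ t) (htm : t ≤ m) :
    0 ≤ c * m + p * s + q * t := by
  rcases le_total 0 p with h1 | h1 <;> rcases le_total 0 q with h2 | h2
  · have : 0 ≤ m := hs.trans hsm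
    positivity
  · nlinarith [mul_nonneg h1 hs, mul_nonneg hq (hs.trans hsm),
      mul_nonneg (neg_nonneg.2 h2) (sub_nonneg.2 htm)]
  · nlinarith [mul_nonneg h2 ht, mul_nonneg hp (hs.trans hsm),
      mul_nonneg (neg_nonneg.2 h1) (sub_nonneg.2 hsm)]
  · nlinarith [mul_nonneg hpq (hs.trans hsm), mul_nonneg (neg_nonneg.2 h2) (sub_nonneg.2 htm),
      mul_nonneg (neg_nonneg.2 h1) (sub_nonneg.2 hsm)]

lemma aux_psd {d : ℕ} {p q : ℝ} (hc : 0 ≤ (1 - p - q) / d)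
    (hp : 0 ≤ (1 - p - q) / d + p) (hq : 0 ≤ (1 - p - q) / d + q)
    (hpq : 0 ≤ (1 - p - q) / d + p + q) {Z : Matrix (Fin d) (Fin d) ℂ} (hZ : Z.PosSemidef) :
    (Lmap d p q Z).PosSemidef := by
  refine Matrix.PosSemidef.of_dotProduct_mulVec_nonneg ?_ fun y => ?_
  · have hh := hZ.isHermitian
    have htr : star Z.trace = Z.trace := by
      rw [← Matrix.trace_conjTranspose, hh.eq]
    have ht : Zᵀᴴ = Zᵀ := hh.transpose
    have htr' : (starRingEnd ℂ) Z.trace = Z.trace := htr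
    simp [Matrix.IsHermitian, Lmap, Matrix.conjTranspose_smul, hh.eq, ht, htr']
  · rw [aux_quad]
    have a1 := hZ.dotProduct_mulVec_nonneg y
    have a2 := hZ.transpose.dotProduct_mulVec_nonneg y
    have b1 := aux_le_trace hZ y
    have b2 := aux_le_trace hZ.transpose y
    rw [Matrix.trace_transpose] at b2
    have hm := a1.trans b1
    rw [mul_assoc]
    generalize Z.trace * (star y ⬝ᵥ y) = m at *
    generalize star y ⬝ᵥ (Z *ᵥ y) = s at *
    generalize star y ⬝ᵥ (Zᵀ *ᵥ y) = t at *
    obtain ⟨m, rfl⟩ : ∃ r : ℝ, (r : ℂ) = m := ⟨m.re, (Complex.eq_re_of_ofReal_le hm).symm⟩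
    obtain ⟨s, rfl⟩ : ∃ r : ℝ, (r : ℂ) = s := ⟨s.re, (Complex.eq_re_of_ofReal_le a1).symm⟩
    obtain ⟨t, rfl⟩ : ∃ r : ℝ, (r : ℂ) = t := ⟨t.re, (Complex.eq_re_of_ofReal_le a2).symm⟩
    have := aux_real hc hp hq hpq (Complex.zero_le_real.1 a1) (Complex.real_le_real.1 b1)
      (Complex.zero_le_real.1 a2) (Complex.real_le_real.1 b2)
    exact_mod_cast this

lemma aux_corners {d : ℕ} (hd : 2 ≤ d) {p q : ℝ} (h : IsKPositive 1 (Lmap d p q)) :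
    0 ≤ (1 - p - q) / d ∧ 0 ≤ (1 - p - q) / d + p ∧ 0 ≤ (1 - p - q) / d + q ∧
    0 ≤ (1 - p - q) / d + p + q := by
  obtain ⟨i, j, hij⟩ : ∃ i j : Fin d, i ≠ j := ⟨⟨0, by omega⟩, ⟨1, by omega⟩, by simp⟩
  have s1 : ∀ a : ℂ, (Pi.single i a : Fin d → ℂ) j = 0 := by
    intro a; simp [Pi.single_apply, hij.symm]
  have s2 : ∀ a : ℂ, (Pi.single j a : Fin d → ℂ) i = 0 := by
    intro a; simp [Pi.single_apply, hij]
  have key := aux_vec p q h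
  have k1 := key (Pi.single i 1) (Pi.single j 1)
  have k2 := key (Pi.single i 1) (Pi.single i 1)
  have k3 := key (Pi.single i 1 + Pi.single j Complex.I) (Pi.single i 1 + Pi.single j Complex.I)
  have k4 := key (Pi.single i 1 + Pi.single j Complex.I) (Pi.single i 1 + Pi.single j (-Complex.I))
  simp only [star_add, Pi.star_single, dotProduct_add, add_dotProduct, single_dotProduct,
    dotProduct_single, Pi.single_eq_same, Pi.add_apply, s1, s2,
    star_one, star_neg, Complex.star_def, Complex.conj_I, mul_zero, zero_mul, mul_one, one_mul,
    add_zero, zero_add, mul_neg, neg_mul, neg_neg, Complex.I_mul_I, add_neg_cancel,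
    neg_zero] at k1 k2 k3 k4
  refine ⟨?_, ?_, ?_, ?_⟩
  · exact_mod_cast k1
  · norm_num at k3
    have : 0 ≤ (1 - p - q) / d * 2 * 2 + p * (2 * 2) := by
      norm_num
      exact_mod_cast k3
    linarith
  · norm_num at k4
    have : 0 ≤ (1 - p - q) / d * 2 * 2 + q * (2 * 2) := by
      norm_num
      exact_mod_cast k4
    linarith
  · exact_mod_cast k2

/-- For `d ≥ 2`, the map `L^{(d)}_{p,q}` is positive (1-positive) iff
`p - (d-1)q ≤ 1`, `q - (d-1)p ≤ 1` and `-1/(d-1) ≤ p + q ≤ 1`. -/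
theorem Lmap_positive_iff {d : ℕ} (hd : 2 ≤ d) (p q : ℝ) :
    IsKPositive 1 (Lmap d p q) ↔
      (p - ((d : ℝ) - 1) * q ≤ 1 ∧ q - ((d : ℝ) - 1) * p ≤ 1 ∧
        -(1 / ((d : ℝ) - 1)) ≤ p + q ∧ p + q ≤ 1) := by
  have hd' : (2 : ℝ) ≤ d := by exact_mod_cast hd
  have hd0 : (0 : ℝ) < d := by linarith
  have hd1 : (0 : ℝ) < d - 1 := by linarith
  have key : IsKPositive 1 (Lmap d p q) ↔
      (0 ≤ (1 - p - q) / d ∧ 0 ≤ (1 - p - q) / d + p ∧ 0 ≤ (1 - p - q) / d + q ∧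
        0 ≤ (1 - p - q) / d + p + q) := by
    refine ⟨aux_corners hd, fun ⟨h1, h2, h3, h4⟩ X hX => ?_⟩
    have hZ := hX.submatrix (fun a : Fin d => ((0 : Fin 1), a))
    have h5 := (aux_psd h1 h2 h3 h4 hZ).submatrix (Prod.snd : Fin 1 × Fin d → Fin d)
    convert h5 using 1
    ext ⟨a, b⟩ ⟨a', b'⟩
    obtain rfl := Subsingleton.elim a 0
    obtain rfl := Subsingleton.elim a' 0
    rfl
  have c1 : 0 ≤ (1 - p - q) / d ↔ p + q ≤ 1 := by
    rw [le_div_iff₀ hd0]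
    constructor <;> intro h <;> linarith
  have c2 : 0 ≤ (1 - p - q) / d + p ↔ q - ((d : ℝ) - 1) * p ≤ 1 := by
    rw [div_add' _ _ _ hd0.ne', le_div_iff₀ hd0]
    constructor <;> intro h <;> linarith
  have c3 : 0 ≤ (1 - p - q) / d + q ↔ p - ((d : ℝ) - 1) * q ≤ 1 := by
    rw [div_add' _ _ _ hd0.ne', le_div_iff₀ hd0]
    constructor <;> intro h <;> linarith
  have c4 : 0 ≤ (1 - p - q) / d + p + q ↔ -(1 / ((d : ℝ) - 1)) ≤ p + q := by
    rw [add_assoc, div_add' _ _ _ hd0.ne', le_div_iff₀ hd0, ← neg_div, div_le_iff₀ hd1]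
    constructor <;> intro h <;> linarith
  rw [key, c1, c2, c3, c4]
  tauto

end
end

section
/- Let d ≥ 4 and let k be an integer with 1 < k ≤ d/2, and p, q ∈ ℝ. The map L^{(d)}_{p,q} is k-positive if and only if p − (d−1)q ≤ 1, p + (d+1)q ≤ 1, (kd−1)p + (d−1)q ≥ −1, and q − (kd−1)p ≤ 1. -/
set_option linter.unusedSectionVars false

open Matrix
open scoped ComplexOrder

noncomputable section

/-- Cauchy-Schwarz trace bound for a matrix factoring through an `ι`-dimensional space. -/
theorem trace_sq_le {d : ℕ} {ι : Type} [Fintype ι] [DecidableEq ι]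
    (X : Matrix (Fin d) ι ℂ) (Y : Matrix ι (Fin d) ℂ) :
    ‖(X * Y).trace‖ ^ 2 ≤ (Fintype.card ι : ℝ) * ∑ a, ∑ b, ‖(X * Y) a b‖ ^ 2 := by
  classical
  set M := X * Y with hM
  let K := LinearMap.range (Matrix.toEuclideanLin X)
  have hK : Module.finrank ℂ K ≤ Fintype.card ι := by
    have := LinearMap.finrank_range_le (Matrix.toEuclideanLin X)
    simpa using this
  let b := stdOrthonormalBasis ℂ K
  let U : Matrix (Fin d) (Fin (Module.finrank ℂ K)) ℂ :=
    Matrix.of fun a i => (b i : EuclideanSpace ℂ (Fin d)) a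
  have hUU : Uᴴ * U = 1 := by
    ext i j
    have h1 := orthonormal_iff_ite.mp b.orthonormal i j
    rw [Submodule.coe_inner, PiLp.inner_apply] at h1
    simp only [Matrix.mul_apply, Matrix.conjTranspose_apply, Matrix.one_apply]
    rw [← h1]
    refine Finset.sum_congr rfl fun a _ => ?_
    simp [U, mul_comm]
  have hcol : U * (Uᴴ * M) = M := by
    ext a j
    have hmem : (WithLp.toLp 2 (fun a => M a j) : EuclideanSpace ℂ (Fin d)) ∈ K := by
      refine ⟨WithLp.toLp 2 (fun i => Y i j), ?_⟩
      rw [Matrix.toEuclideanLin_toLp]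
      congr 1
    have h2 := b.sum_repr' ⟨_, hmem⟩
    have h3 := congrArg (fun v : K => (v : EuclideanSpace ℂ (Fin d)) a) h2
    simp only [Submodule.coe_sum, Submodule.coe_smul, Submodule.coe_inner] at h3
    rw [WithLp.ofLp_sum, Finset.sum_apply] at h3
    rw [Matrix.mul_apply]
    refine Eq.trans ?_ h3
    refine Finset.sum_congr rfl fun i _ => ?_
    simp [U, Matrix.mul_apply, PiLp.inner_apply, mul_comm]
  set P := U * Uᴴ with hP
  have hPM : P * M = M := by rw [hP, Matrix.mul_assoc, hcol]
  have hPh : Pᴴ = P := by simp [hP]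
  have hPP : P * P = P := by
    rw [hP, Matrix.mul_assoc, ← Matrix.mul_assoc Uᴴ, hUU, Matrix.one_mul]
  have hPt : P.trace = (Module.finrank ℂ K : ℂ) := by
    rw [hP, Matrix.trace_mul_comm, hUU]; simp
  have hPn : ∑ x : Fin d × Fin d, ‖P x.1 x.2‖ ^ 2 = (Module.finrank ℂ K : ℝ) := by
    have : ((∑ x : Fin d × Fin d, ‖P x.1 x.2‖ ^ 2 : ℝ) : ℂ) = (Module.finrank ℂ K : ℂ) := by
      rw [← hPt]
      conv_rhs => rw [← hPP]
      nth_rewrite 3 [← hPh]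
      rw [Fintype.sum_prod_type]
      push_cast
      simp only [Matrix.trace, Matrix.diag, Matrix.mul_apply, Matrix.conjTranspose_apply]
      refine Finset.sum_congr rfl fun a _ => Finset.sum_congr rfl fun c _ => ?_
      exact (Complex.mul_conj' _).symm
    exact_mod_cast this
  have htr : ‖M.trace‖ ≤ ∑ x : Fin d × Fin d, ‖P x.1 x.2‖ * ‖M x.2 x.1‖ := by
    conv_lhs => rw [← hPM]
    simp only [Matrix.trace, Matrix.diag, Matrix.mul_apply]
    rw [← Fintype.sum_prod_type' (fun a c => P a c * M c a)]
    refine (norm_sum_le _ _).trans (le_of_eq ?_)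
    simp
  have hCS := Finset.sum_mul_sq_le_sq_mul_sq Finset.univ
    (fun x : Fin d × Fin d => ‖P x.1 x.2‖) (fun x => ‖M x.2 x.1‖)
  have hsum : ∑ x : Fin d × Fin d, ‖M x.2 x.1‖ ^ 2 = ∑ a, ∑ b, ‖M a b‖ ^ 2 := by
    rw [Fintype.sum_prod_type, Finset.sum_comm]
  simp only [hPn, hsum] at hCS
  have h0 : 0 ≤ ∑ a, ∑ b, ‖M a b‖ ^ 2 := by positivity
  calc ‖M.trace‖ ^ 2 ≤ _ := pow_le_pow_left₀ (norm_nonneg _) htr 2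
    _ ≤ _ := hCS
    _ ≤ _ := by gcongr

/-- The symmetric part. -/
def symPart {d : ℕ} (W : Matrix (Fin d) (Fin d) ℂ) : Matrix (Fin d) (Fin d) ℂ :=
  (1 / 2 : ℂ) • (W + Wᵀ)

/-- The antisymmetric part. -/
def asymPart {d : ℕ} (W : Matrix (Fin d) (Fin d) ℂ) : Matrix (Fin d) (Fin d) ℂ :=
  (1 / 2 : ℂ) • (W - Wᵀ)

/-- Squared Frobenius norm. -/
def fro {d : ℕ} (W : Matrix (Fin d) (Fin d) ℂ) : ℝ := ∑ a, ∑ b, ‖W a b‖ ^ 2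

theorem fro_nonneg {d : ℕ} (W : Matrix (Fin d) (Fin d) ℂ) : 0 ≤ fro W := by
  unfold fro; positivity

theorem fro_coe {d : ℕ} (W : Matrix (Fin d) (Fin d) ℂ) :
    ((fro W : ℝ) : ℂ) = ∑ a, ∑ b, W a b * star (W a b) := by
  unfold fro
  push_cast
  refine Finset.sum_congr rfl fun a _ => Finset.sum_congr rfl fun c _ => ?_
  exact (Complex.mul_conj' _).symm

theorem fro_add {d : ℕ} (W : Matrix (Fin d) (Fin d) ℂ) :
    ((fro (symPart W) + fro (asymPart W) : ℝ) : ℂ) = ∑ a, ∑ b, W a b * star (W a b) := by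
  push_cast
  rw [fro_coe, fro_coe]
  have h : ∑ a, ∑ b, W a b * star (W a b) =
      ∑ a, ∑ b, (1 / 2 : ℂ) * (W a b * star (W a b) + W b a * star (W b a)) := by
    simp only [mul_add, Finset.sum_add_distrib, ← Finset.mul_sum]
    rw [Finset.sum_comm (f := fun a b => W b a * star (W b a))]
    ring
  rw [h, ← Finset.sum_add_distrib]
  refine Finset.sum_congr rfl fun a _ => ?_
  rw [← Finset.sum_add_distrib]
  refine Finset.sum_congr rfl fun c _ => ?_
  simp [symPart, asymPart]
  ring

theorem fro_sub {d : ℕ} (W : Matrix (Fin d) (Fin d) ℂ) :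
    ((fro (symPart W) - fro (asymPart W) : ℝ) : ℂ) = ∑ a, ∑ b, W a b * star (W b a) := by
  push_cast
  rw [fro_coe, fro_coe]
  have h : ∑ a, ∑ b, W a b * star (W b a) =
      ∑ a, ∑ b, (1 / 2 : ℂ) * (W a b * star (W b a) + W b a * star (W a b)) := by
    simp only [mul_add, Finset.sum_add_distrib, ← Finset.mul_sum]
    rw [Finset.sum_comm (f := fun a b => W b a * star (W a b))]
    ring
  rw [h, ← Finset.sum_sub_distrib]
  refine Finset.sum_congr rfl fun a _ => ?_
  rw [← Finset.sum_sub_distrib]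
  refine Finset.sum_congr rfl fun c _ => ?_
  simp [symPart, asymPart]
  ring

theorem trace_symPart {d : ℕ} (W : Matrix (Fin d) (Fin d) ℂ) :
    (symPart W).trace = W.trace := by
  simp [symPart, Matrix.trace_add]
  ring

/-- entries of the output on a rank one input -/
theorem idTensor_apply {d k : ℕ} (p q : ℝ) (A : Matrix (Fin k) (Fin d) ℂ)
    (x y : Fin k × Fin d) :
    idTensor (Lmap d p q) (vecMulVec (fun z => A z.1 z.2) (star fun z => A z.1 z.2)) x y =
      (((1 - p - q : ℝ) : ℂ) / (d : ℂ)) * ((∑ c, A x.1 c * star (A y.1 c)) *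
        (if x.2 = y.2 then 1 else 0))
      + p * (A x.1 x.2 * star (A y.1 y.2)) + q * (A x.1 y.2 * star (A y.1 x.2)) := by
  simp [idTensor, Lmap, vecMulVec_apply, Matrix.trace, Matrix.one_apply]

theorem form_eq {d k : ℕ} (p q : ℝ) (A B : Matrix (Fin k) (Fin d) ℂ) :
    star (fun z : Fin k × Fin d => B z.1 z.2) ⬝ᵥ
      (idTensor (Lmap d p q) (vecMulVec (fun z => A z.1 z.2) (star fun z => A z.1 z.2)) *ᵥ
        (fun z : Fin k × Fin d => B z.1 z.2)) =
      (((1 - p - q : ℝ) : ℂ) / (d : ℂ)) * (∑ a, ∑ b, (Bᴴ * A) a b * star ((Bᴴ * A) a b))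
      + p * ((Bᴴ * A).trace * star (Bᴴ * A).trace)
      + q * (∑ a, ∑ b, (Bᴴ * A) a b * star ((Bᴴ * A) b a)) := by
  have e : star (fun z : Fin k × Fin d => B z.1 z.2) ⬝ᵥ
      (idTensor (Lmap d p q) (vecMulVec (fun z => A z.1 z.2) (star fun z => A z.1 z.2)) *ᵥ
        (fun z : Fin k × Fin d => B z.1 z.2)) =
      ∑ i, ∑ a, ∑ j, ∑ b, star (B i a) * (((((1 - p - q : ℝ) : ℂ) / (d : ℂ)) *
      ((∑ c, A i c * star (A j c)) * (if a = b then 1 else 0))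
      + p * (A i a * star (A j b)) + q * (A i b * star (A j a))) * B j b) := by
    simp only [dotProduct, mulVec, idTensor_apply, Fintype.sum_prod_type, Pi.star_apply,
      Finset.mul_sum]
  rw [e]
  have e1 : ∑ i, ∑ a, ∑ j, ∑ b, star (B i a) * (((∑ c, A i c * star (A j c)) *
      (if a = b then 1 else 0)) * B j b) = ∑ a, ∑ b, (Bᴴ * A) a b * star ((Bᴴ * A) a b) := by
    have : ∀ i a j, ∑ b, star (B i a) * (((∑ c, A i c * star (A j c)) *
      (if a = b then 1 else 0)) * B j b) =
        ∑ c, (star (B i a) * A i c) * (star (A j c) * B j a) := by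
      intro i a j
      simp only [mul_ite, mul_one, mul_zero, ite_mul, zero_mul, Finset.sum_ite_eq,
        Finset.mem_univ, if_true, Finset.mul_sum, Finset.sum_mul]
      exact Finset.sum_congr rfl fun c _ => by ring
    simp only [this]
    rw [Finset.sum_comm]
    refine Finset.sum_congr rfl fun a _ => ?_
    have : ∀ i, ∑ j, ∑ c, (star (B i a) * A i c) * (star (A j c) * B j a) =
      ∑ c, ∑ j, (star (B i a) * A i c) * (star (A j c) * B j a) := fun i => Finset.sum_comm
    simp only [this]
    rw [Finset.sum_comm]
    refine Finset.sum_congr rfl fun c _ => ?_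
    simp only [Matrix.mul_apply, conjTranspose_apply, star_sum, star_mul, star_star,
      Finset.sum_mul_sum]
  have e2 : ∑ i, ∑ a, ∑ j, ∑ b, star (B i a) * ((A i a * star (A j b)) * B j b) =
      (Bᴴ * A).trace * star (Bᴴ * A).trace := by
    have h : (Bᴴ * A).trace = ∑ i, ∑ a, star (B i a) * A i a := by
      simp only [Matrix.trace, Matrix.diag, Matrix.mul_apply, conjTranspose_apply]
      rw [Finset.sum_comm]
    rw [h, star_sum, Finset.sum_mul]
    refine Finset.sum_congr rfl fun i _ => ?_
    rw [Finset.sum_mul]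
    refine Finset.sum_congr rfl fun a _ => ?_
    rw [Finset.mul_sum]
    refine Finset.sum_congr rfl fun j _ => ?_
    rw [star_sum, Finset.mul_sum]
    refine Finset.sum_congr rfl fun b _ => ?_
    rw [star_mul, star_star]
    ring
  have e3 : ∑ i, ∑ a, ∑ j, ∑ b, star (B i a) * ((A i b * star (A j a)) * B j b) =
      ∑ a, ∑ b, (Bᴴ * A) a b * star ((Bᴴ * A) b a) := by
    rw [Finset.sum_comm]
    refine Finset.sum_congr rfl fun a _ => ?_
    have : ∀ i, ∑ j, ∑ b, star (B i a) * ((A i b * star (A j a)) * B j b) =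
      ∑ b, ∑ j, star (B i a) * ((A i b * star (A j a)) * B j b) := fun i => Finset.sum_comm
    simp only [this]
    rw [Finset.sum_comm]
    refine Finset.sum_congr rfl fun c _ => ?_
    simp only [Matrix.mul_apply, conjTranspose_apply, star_sum, star_mul, star_star,
      Finset.sum_mul_sum]
    refine Finset.sum_congr rfl fun i _ => Finset.sum_congr rfl fun j _ => ?_
    ring
  rw [← e1, ← e2, ← e3]
  simp only [Finset.mul_sum, ← Finset.sum_add_distrib]
  refine Finset.sum_congr rfl fun i _ => Finset.sum_congr rfl fun a _ =>
    Finset.sum_congr rfl fun j _ => Finset.sum_congr rfl fun b _ => ?_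
  ring

/-- The real quadratic form. -/
def qForm {d : ℕ} (p q : ℝ) (W : Matrix (Fin d) (Fin d) ℂ) : ℝ :=
  (1 - p - q) / d * (fro (symPart W) + fro (asymPart W)) + p * ‖W.trace‖ ^ 2
    + q * (fro (symPart W) - fro (asymPart W))

theorem form_eq_qForm {d k : ℕ} (p q : ℝ) (A B : Matrix (Fin k) (Fin d) ℂ) :
    star (fun z : Fin k × Fin d => B z.1 z.2) ⬝ᵥ
      (idTensor (Lmap d p q) (vecMulVec (fun z => A z.1 z.2) (star fun z => A z.1 z.2)) *ᵥ
        (fun z : Fin k × Fin d => B z.1 z.2)) = ((qForm p q (Bᴴ * A) : ℝ) : ℂ) := by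
  rw [form_eq, ← fro_add, ← fro_sub]
  have : (Bᴴ * A).trace * star (Bᴴ * A).trace = ((‖(Bᴴ * A).trace‖ ^ 2 : ℝ) : ℂ) := by
    push_cast
    exact Complex.mul_conj' _
  rw [this]
  unfold qForm
  push_cast
  ring

theorem kPositive_iff {d k : ℕ} (p q : ℝ) :
    IsKPositive k (Lmap d p q) ↔
      ∀ A B : Matrix (Fin k) (Fin d) ℂ, 0 ≤ qForm p q (Bᴴ * A) := by
  constructor
  · intro h A B
    have h1 := (h _ (posSemidef_vecMulVec_self_star
      (fun z : Fin k × Fin d => A z.1 z.2))).dotProduct_mulVec_nonneg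
      (fun z : Fin k × Fin d => B z.1 z.2)
    rw [form_eq_qForm] at h1
    exact_mod_cast h1
  · intro h X hX
    obtain ⟨m, v, rfl⟩ := Matrix.posSemidef_iff_eq_sum_vecMulVec.mp hX
    have hlin : idTensor (Lmap d p q) (∑ i, vecMulVec (v i) (star (v i))) =
        ∑ i, idTensor (Lmap d p q) (vecMulVec (v i) (star (v i))) := by
      ext x y
      have : (Matrix.of fun a b => (∑ i, vecMulVec (v i) (star (v i))) (x.1, a) (y.1, b)) =
          ∑ i, (Matrix.of fun a b => (vecMulVec (v i) (star (v i))) (x.1, a) (y.1, b)) := by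
        ext a b
        simp [Matrix.sum_apply]
      rw [Matrix.sum_apply]
      simp only [idTensor, Matrix.of_apply]
      rw [this, map_sum, Matrix.sum_apply]
    rw [hlin]
    refine Matrix.posSemidef_sum _ fun i _ => ?_
    have hv : v i = fun z : Fin k × Fin d => (Matrix.of fun a b => v i (a, b)) z.1 z.2 := rfl
    rw [hv]
    generalize (Matrix.of fun a b => v i (a, b) : Matrix (Fin k) (Fin d) ℂ) = A
    refine PosSemidef.of_dotProduct_mulVec_nonneg ?_ ?_
    · ext x y
      rw [conjTranspose_apply, idTensor_apply, idTensor_apply]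
      by_cases hxy : x.2 = y.2
      · simp [hxy, mul_comm]
      · have : ¬ y.2 = x.2 := fun h => hxy h.symm
        simp [hxy, this, mul_comm]
    · intro w
      have hw : w = fun z : Fin k × Fin d => (Matrix.of fun a b => w (a, b)) z.1 z.2 := rfl
      rw [hw, form_eq_qForm]
      exact_mod_cast h _ _

theorem qForm_nonneg {d k : ℕ} (hd : 4 ≤ d) (hk : 1 < k) (p q : ℝ)
    (h1 : p - ((d : ℝ) - 1) * q ≤ 1) (h2 : p + ((d : ℝ) + 1) * q ≤ 1)
    (h3 : -1 ≤ ((k : ℝ) * d - 1) * p + ((d : ℝ) - 1) * q)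
    (h4 : q - ((k : ℝ) * d - 1) * p ≤ 1) (A B : Matrix (Fin k) (Fin d) ℂ) :
    0 ≤ qForm p q (Bᴴ * A) := by
  set W := Bᴴ * A with hW
  have hd0 : (0 : ℝ) < d := by exact_mod_cast (by omega : 0 < d)
  have hk0 : (0 : ℝ) < k := by exact_mod_cast (by omega : 0 < k)
  have t1 : ‖W.trace‖ ^ 2 ≤ k * (fro (symPart W) + fro (asymPart W)) := by
    have := trace_sq_le Bᴴ A
    rw [← hW, Fintype.card_fin] at this
    have e : fro W = fro (symPart W) + fro (asymPart W) := by
      have := (fro_coe W).trans (fro_add W).symm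
      exact_mod_cast this
    rw [← e]
    exact this
  have t2 : ‖W.trace‖ ^ 2 ≤ 2 * k * fro (symPart W) := by
    have e : symPart W = fromCols Bᴴ Aᵀ * fromRows ((1 / 2 : ℂ) • A) ((1 / 2 : ℂ) • Bᴴᵀ) := by
      rw [fromCols_mul_fromRows, hW]
      simp [symPart, Matrix.transpose_mul]
    have := trace_sq_le (fromCols Bᴴ Aᵀ) (fromRows ((1 / 2 : ℂ) • A) ((1 / 2 : ℂ) • Bᴴᵀ))
    rw [← e, trace_symPart] at this
    refine this.trans (le_of_eq ?_)
    rw [Fintype.card_sum, Fintype.card_fin]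
    unfold fro
    push_cast
    ring
  have hs := fro_nonneg (symPart W)
  have ht := fro_nonneg (asymPart W)
  have hn : 0 ≤ ‖W.trace‖ ^ 2 := by positivity
  unfold qForm
  generalize fro (symPart W) = s at *
  generalize fro (asymPart W) = t at *
  generalize ‖W.trace‖ ^ 2 = n at *
  obtain ⟨c, hc⟩ : ∃ c : ℝ, c = (1 - p - q) / d := ⟨_, rfl⟩
  have hcd : c * d = 1 - p - q := by rw [hc]; field_simp
  rw [← hc]
  have g1 : 0 ≤ c + q := by
    by_contra hneg
    push Not at hneg
    nlinarith
  have g2 : 0 ≤ c - q := by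
    by_contra hneg
    push Not at hneg
    nlinarith
  have g3 : 0 ≤ c + q + k * p := by
    by_contra hneg
    push Not at hneg
    nlinarith
  have g4 : 0 ≤ c + k * p := by
    by_contra hneg
    push Not at hneg
    nlinarith
  clear h1 h2 h3 h4 hc hcd
  rcases le_or_gt 0 p with hp | hp
  · have := mul_nonneg g1 hs
    have := mul_nonneg g2 ht
    have := mul_nonneg hp hn
    linarith
  rcases le_or_gt q 0 with hq | hq
  · have a1 := mul_nonneg g3 (add_nonneg hs ht)
    have a2 := mul_nonneg (neg_nonneg.2 hq) ht
    have a3 := mul_nonneg (neg_nonneg.2 hp.le) (sub_nonneg.2 t1)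
    linarith
  rcases le_or_gt q (- k * p) with hqk | hqk
  · obtain ⟨r, hr⟩ : ∃ r, q = k * r := ⟨q / k, by field_simp⟩
    subst hr
    have hr0 : 0 ≤ r := (pos_of_mul_pos_right hq hk0.le).le
    have hr1 : 0 ≤ - p - r := by
      by_contra hneg
      push Not at hneg
      nlinarith
    have a1 := mul_nonneg g4 (add_nonneg hs ht)
    have a2 := mul_nonneg hr0 (sub_nonneg.2 t2)
    have a3 := mul_nonneg hr1 (sub_nonneg.2 t1)
    linarith
  · have a1 := mul_nonneg g2 (add_nonneg hs ht)
    have a2 := mul_nonneg (sub_nonneg.2 hqk.le) hs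
    have a3 := mul_nonneg (neg_nonneg.2 hp.le) (sub_nonneg.2 t2)
    linarith

theorem qForm_coe {d : ℕ} (p q : ℝ) (W : Matrix (Fin d) (Fin d) ℂ) :
    ((qForm p q W : ℝ) : ℂ) = (((1 - p - q) / d : ℝ) : ℂ) * (W * Wᴴ).trace
      + p * (W.trace * star W.trace) + q * (W * Wᴴᵀ).trace := by
  have e1 : (W * Wᴴ).trace = ∑ a, ∑ b, W a b * star (W a b) := by
    simp [Matrix.trace, Matrix.mul_apply]
  have e2 : (W * Wᴴᵀ).trace = ∑ a, ∑ b, W a b * star (W b a) := by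
    simp [Matrix.trace, Matrix.mul_apply]
  have : W.trace * star W.trace = ((‖W.trace‖ ^ 2 : ℝ) : ℂ) := by
    push_cast
    exact Complex.mul_conj' _
  rw [e1, e2, ← fro_add, ← fro_sub, this]
  unfold qForm
  push_cast
  ring

/-- selection of `k` coordinates with offset `o` -/
def selM (k d o : ℕ) : Matrix (Fin k) (Fin d) ℂ :=
  Matrix.of fun i a => if (a : ℕ) = i + o then 1 else 0

theorem selM_conj (k d o : ℕ) : (selM k d o)ᴴ = (selM k d o)ᵀ := by
  ext a i
  simp only [selM, conjTranspose_apply, transpose_apply, of_apply]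
  split_ifs <;> simp

theorem selM_mul {k d o o' : ℕ} (h : k + o ≤ d) (i j : Fin k) :
    (selM k d o * (selM k d o')ᵀ) i j = if (i : ℕ) + o = j + o' then 1 else 0 := by
  rw [Matrix.mul_apply, Finset.sum_eq_single (⟨i + o, by omega⟩ : Fin d)]
  · simp [selM]
  · intro b _ hb
    have : ¬ ((b : ℕ) = i + o) := fun h => hb (Fin.ext h)
    simp [selM, this]
  · simp

theorem selM_self {k d o : ℕ} (h : k + o ≤ d) : selM k d o * (selM k d o)ᵀ = 1 := by
  ext i j
  rw [selM_mul h, Matrix.one_apply]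
  simp [Fin.ext_iff]

theorem selM_ne {k d : ℕ} (h : 2 * k ≤ d) : selM k d 0 * (selM k d k)ᵀ = 0 := by
  ext i j
  rw [selM_mul (by omega), if_neg (by omega)]
  rfl

theorem selM_ne' {k d : ℕ} (h : 2 * k ≤ d) : selM k d k * (selM k d 0)ᵀ = 0 := by
  ext i j
  rw [selM_mul (by omega), if_neg (by omega)]
  rfl

theorem qForm_sel {d k : ℕ} (h : k ≤ d) (p q : ℝ) (X : Matrix (Fin k) (Fin k) ℂ) :
    ((qForm p q ((selM k d 0)ᴴ * (X * selM k d 0)) : ℝ) : ℂ) =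
      (((1 - p - q) / d : ℝ) : ℂ) * (X * Xᴴ).trace
      + p * (X.trace * star X.trace) + q * (X * Xᴴᵀ).trace := by
  have hE : selM k d 0 * (selM k d 0)ᵀ = 1 := selM_self (by omega)
  have hc := selM_conj k d 0
  have key : ∀ Y Z : Matrix (Fin k) (Fin k) ℂ,
      (((selM k d 0)ᵀ * (Y * selM k d 0)) * ((selM k d 0)ᵀ * (Z * selM k d 0))).trace =
        (Y * Z).trace := by
    intro Y Z
    rw [Matrix.mul_assoc, Matrix.trace_mul_comm]
    simp only [Matrix.mul_assoc, hE, Matrix.mul_one]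
    rw [← Matrix.mul_assoc (selM k d 0), hE, Matrix.one_mul]
  have key1 : ((selM k d 0)ᵀ * (X * selM k d 0)).trace = X.trace := by
    rw [Matrix.trace_mul_comm, Matrix.mul_assoc, hE, Matrix.mul_one]
  have hct : ((selM k d 0)ᵀ)ᴴ = selM k d 0 := by rw [← hc, conjTranspose_conjTranspose]
  rw [qForm_coe, hc, key1]
  have e1 : ((selM k d 0)ᵀ * (X * selM k d 0))ᴴ = (selM k d 0)ᵀ * (Xᴴ * selM k d 0) := by
    simp only [conjTranspose_mul, hct, hc, Matrix.mul_assoc]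
  rw [e1, key]
  have e2 : ((selM k d 0)ᵀ * (Xᴴ * selM k d 0))ᵀ = (selM k d 0)ᵀ * (Xᴴᵀ * selM k d 0) := by
    simp only [transpose_mul, transpose_transpose, Matrix.mul_assoc]
  rw [e2, key]

theorem qForm_iso {d k : ℕ} (h : 2 * k ≤ d) (p q : ℝ) :
    qForm p q ((selM k d 0 + Complex.I • selM k d k)ᴴ * (selM k d 0 + Complex.I • selM k d k)) =
      4 * k * ((1 - p - q) / d + k * p) := by
  have hG : (selM k d 0 + Complex.I • selM k d k) * (selM k d 0 + Complex.I • selM k d k)ᴴ =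
      (2 : ℂ) • 1 := by
    rw [conjTranspose_add, conjTranspose_smul, selM_conj, selM_conj]
    simp only [Matrix.add_mul, Matrix.mul_add, Matrix.smul_mul, Matrix.mul_smul, selM_ne h,
      selM_ne' h, selM_self (show k + 0 ≤ d by omega), selM_self (show k + k ≤ d by omega)]
    simp [smul_smul, two_smul]
  have hT : (selM k d 0 + Complex.I • selM k d k) * (selM k d 0 + Complex.I • selM k d k)ᵀ =
      0 := by
    rw [transpose_add, transpose_smul]
    simp only [Matrix.add_mul, Matrix.mul_add, Matrix.smul_mul, Matrix.mul_smul, selM_ne h,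
      selM_ne' h, selM_self (show k + 0 ≤ d by omega), selM_self (show k + k ≤ d by omega)]
    simp [smul_smul]
  generalize selM k d 0 + Complex.I • selM k d k = V at *
  have e : ((qForm p q (Vᴴ * V) : ℝ) : ℂ) = ((4 * k * ((1 - p - q) / d + k * p) : ℝ) : ℂ) := by
    rw [qForm_coe]
    have e1 : (Vᴴ * V).trace = 2 * k := by
      rw [Matrix.trace_mul_comm, hG]; simp
    have e2 : (Vᴴ * V * (Vᴴ * V)ᴴ).trace = 4 * k := by
      rw [conjTranspose_mul, conjTranspose_conjTranspose, Matrix.mul_assoc,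
        ← Matrix.mul_assoc V, hG, Matrix.smul_mul, Matrix.one_mul, Matrix.mul_smul,
        Matrix.trace_smul, e1, smul_eq_mul]
      ring
    have e3 : (Vᴴ * V * (Vᴴ * V)ᴴᵀ).trace = 0 := by
      rw [conjTranspose_mul, conjTranspose_conjTranspose, transpose_mul, Matrix.mul_assoc,
        ← Matrix.mul_assoc V, hT]
      simp
    rw [e1, e2, e3]
    simp
    ring
  exact_mod_cast e


/-- For `d ≥ 4` and an integer `k` with `1 < k ≤ d/2`, the map
`L^{(d)}_{p,q}` is `k`-positive iff `p - (d-1)q ≤ 1`, `p + (d+1)q ≤ 1`,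
`(kd-1)p + (d-1)q ≥ -1` and `q - (kd-1)p ≤ 1`. -/
theorem Lmap_kPositive_iff_small {d k : ℕ} (hd : 4 ≤ d) (hk : 1 < k) (hkd : 2 * k ≤ d)
    (p q : ℝ) :
    IsKPositive k (Lmap d p q) ↔
      (p - ((d : ℝ) - 1) * q ≤ 1 ∧ p + ((d : ℝ) + 1) * q ≤ 1 ∧
        -1 ≤ ((k : ℝ) * d - 1) * p + ((d : ℝ) - 1) * q ∧
        q - ((k : ℝ) * d - 1) * p ≤ 1) := by
  have hd0 : (0 : ℝ) < d := by exact_mod_cast (by omega : 0 < d)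
  have hk0 : (0 : ℝ) < k := by exact_mod_cast (by omega : 0 < k)
  rw [kPositive_iff]
  constructor
  · intro h
    obtain ⟨c, hc⟩ : ∃ c : ℝ, c = (1 - p - q) / d := ⟨_, rfl⟩
    have hcd : c * d = 1 - p - q := by rw [hc]; field_simp
    let i0 : Fin k := ⟨0, by omega⟩
    let i1 : Fin k := ⟨1, by omega⟩
    have h01 : i0 ≠ i1 := by simp [i0, i1, Fin.ext_iff]
    have h10 : i1 ≠ i0 := h01.symm
    have g1 : 0 ≤ c + q := by
      have a := h ((Matrix.single i0 i1 (1 : ℂ) + Matrix.single i1 i0 1) * selM k d 0)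
        (selM k d 0)
      have b := qForm_sel (by omega : k ≤ d) p q
        (Matrix.single i0 i1 (1 : ℂ) + Matrix.single i1 i0 1)
      rw [← hc] at b
      have b' : qForm p q ((selM k d 0)ᴴ *
        ((Matrix.single i0 i1 (1 : ℂ) + Matrix.single i1 i0 1) * selM k d 0)) =
          2 * (c + q) := by
        have e : ((2 * (c + q) : ℝ) : ℂ) = 2 * c + 2 * q := by push_cast; ring
        rw [← Complex.ofReal_inj, b, e]
        simp [conjTranspose_add, Matrix.mul_add, Matrix.add_mul,
          Matrix.trace_add, h01, h10]
        ring
      linarith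
    have g2 : 0 ≤ c - q := by
      have a := h ((Matrix.single i0 i1 (1 : ℂ) - Matrix.single i1 i0 1) * selM k d 0)
        (selM k d 0)
      have b := qForm_sel (by omega : k ≤ d) p q
        (Matrix.single i0 i1 (1 : ℂ) - Matrix.single i1 i0 1)
      rw [← hc] at b
      have b' : qForm p q ((selM k d 0)ᴴ *
        ((Matrix.single i0 i1 (1 : ℂ) - Matrix.single i1 i0 1) * selM k d 0)) =
          2 * (c - q) := by
        have e : ((2 * (c - q) : ℝ) : ℂ) = 2 * c - 2 * q := by push_cast; ring
        rw [← Complex.ofReal_inj, b, e]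
        simp [conjTranspose_sub, Matrix.mul_sub, Matrix.sub_mul,
          Matrix.trace_sub, h01, h10]
        ring
      linarith
    have g3 : 0 ≤ c + q + k * p := by
      have a := h ((1 : Matrix (Fin k) (Fin k) ℂ) * selM k d 0) (selM k d 0)
      have b := qForm_sel (by omega : k ≤ d) p q 1
      rw [← hc] at b
      have b' : qForm p q ((selM k d 0)ᴴ * ((1 : Matrix (Fin k) (Fin k) ℂ) * selM k d 0)) = k * (c + q + k * p) := by
        rw [← Complex.ofReal_inj, b]
        simp
        ring
      rw [b'] at a
      exact nonneg_of_mul_nonneg_right a hk0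
    have g4 : 0 ≤ c + k * p := by
      have a := h (selM k d 0 + Complex.I • selM k d k) (selM k d 0 + Complex.I • selM k d k)
      rw [qForm_iso hkd, ← hc] at a
      exact nonneg_of_mul_nonneg_right a (by positivity)
    have f1 := mul_nonneg hd0.le g1
    have f2 := mul_nonneg hd0.le g2
    have f3 := mul_nonneg hd0.le g3
    have f4 := mul_nonneg hd0.le g4
    refine ⟨?_, ?_, ?_, ?_⟩ <;> linarith
  · rintro ⟨h1, h2, h3, h4⟩ A B
    exact qForm_nonneg hd hk p q h1 h2 h3 h4 A B


end
end

section
/- Let d ≥ 2 and p, q ∈ ℝ. The map L^{(d)}_{p,q} is completely positive if and only if p − (d−1)q ≤ 1, p + (d+1)q ≤ 1, and (d+1)p + q ≥ −1/(d−1). -/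
set_option linter.unusedSectionVars false

open Matrix
open scoped ComplexOrder

noncomputable section

lemma idTensor_add' {k m n : ℕ} (L M : Matrix (Fin m) (Fin m) ℂ →ₗ[ℂ] Matrix (Fin n) (Fin n) ℂ)
    (X : Matrix (Fin k × Fin m) (Fin k × Fin m) ℂ) :
    idTensor (L + M) X = idTensor L X + idTensor M X := by
  ext x y; simp [idTensor]

lemma IsKPositive.add' {k m n : ℕ} {L M : Matrix (Fin m) (Fin m) ℂ →ₗ[ℂ] Matrix (Fin n) (Fin n) ℂ}
    (hL : IsKPositive k L) (hM : IsKPositive k M) : IsKPositive k (L + M) := by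
  intro X hX
  rw [idTensor_add']
  exact (hL X hX).add (hM X hX)

lemma IsKPositive.zero' {k m n : ℕ} :
    IsKPositive k (0 : Matrix (Fin m) (Fin m) ℂ →ₗ[ℂ] Matrix (Fin n) (Fin n) ℂ) := by
  intro X hX
  have : idTensor (0 : Matrix (Fin m) (Fin m) ℂ →ₗ[ℂ] Matrix (Fin n) (Fin n) ℂ) X = 0 := by
    ext x y; simp [idTensor]
  rw [this]
  exact Matrix.PosSemidef.zero

lemma IsKPositive.sum' {k m n : ℕ} {ι : Type*} (s : Finset ι)
    (L : ι → Matrix (Fin m) (Fin m) ℂ →ₗ[ℂ] Matrix (Fin n) (Fin n) ℂ)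
    (hL : ∀ i, IsKPositive k (L i)) : IsKPositive k (∑ i ∈ s, L i) :=
  Finset.sum_induction L (IsKPositive k) (fun _ _ h h' => h.add' h') IsKPositive.zero'
    (fun i _ => hL i)

lemma IsKPositive.smul' {k m n : ℕ} {L : Matrix (Fin m) (Fin m) ℂ →ₗ[ℂ] Matrix (Fin n) (Fin n) ℂ}
    (hL : IsKPositive k L) {c : ℝ} (hc : 0 ≤ c) : IsKPositive k ((c : ℂ) • L) := by
  intro X hX
  have : idTensor ((c : ℂ) • L) X = (c : ℂ) • idTensor L X := by
    ext x y; simp [idTensor]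
  rw [this]
  exact (hL X hX).smul (by exact_mod_cast hc)

/-- The conjugation map `Z ↦ K Z Kᴴ`. -/
def conjMap {d : ℕ} (K : Matrix (Fin d) (Fin d) ℂ) :
    Matrix (Fin d) (Fin d) ℂ →ₗ[ℂ] Matrix (Fin d) (Fin d) ℂ :=
  (LinearMap.mulRight ℂ Kᴴ).comp (LinearMap.mulLeft ℂ K)

lemma conjMap_apply {d : ℕ} (K Z : Matrix (Fin d) (Fin d) ℂ) : conjMap K Z = K * Z * Kᴴ := by
  simp [conjMap]

lemma conjMap_pos {d : ℕ} (k : ℕ) (K : Matrix (Fin d) (Fin d) ℂ) : IsKPositive k (conjMap K) := by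
  intro X hX
  have : idTensor (conjMap K) X =
      (Matrix.kroneckerMap (· * ·) (1 : Matrix (Fin k) (Fin k) ℂ) K) * X *
      (Matrix.kroneckerMap (· * ·) (1 : Matrix (Fin k) (Fin k) ℂ) K)ᴴ := by
    ext ⟨i, a⟩ ⟨j, b⟩
    simp [idTensor, conjMap_apply, Matrix.mul_apply, Fintype.sum_prod_type, Matrix.one_apply,
      Finset.sum_ite_eq, apply_ite]
  rw [this]
  exact hX.mul_mul_conjTranspose_same _

/-- Kraus operators. -/
def krausOp {d : ℕ} (s t : ℝ) (i j : Fin d) : Matrix (Fin d) (Fin d) ℂ :=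
  Matrix.single i j 1 + (s : ℂ) • Matrix.single j i 1 - (if i = j then (t : ℂ) else 0) • 1

lemma kraus_conj {d : ℕ} (s t : ℝ) (i j : Fin d) : (krausOp s t i j)ᴴ =
    Matrix.single j i 1 + (s : ℂ) • Matrix.single i j 1 - (if i = j then (t : ℂ) else 0) • 1 := by
  unfold krausOp
  split_ifs <;> simp

lemma single_single_entry {d : ℕ} (Z : Matrix (Fin d) (Fin d) ℂ) (i j k l a b : Fin d) :
    (Matrix.single i j (1:ℂ) * Z * Matrix.single k l (1:ℂ) : Matrix (Fin d) (Fin d) ℂ) a b =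
      if i = a then (if l = b then Z j k else 0) else 0 := by
  rw [Matrix.single_mul_mul_single]
  simp [Matrix.single_apply]
  grind

lemma kraus_sum {d : ℕ} (s t : ℝ) (Z : Matrix (Fin d) (Fin d) ℂ) :
    ∑ i, ∑ j, krausOp s t i j * Z * (krausOp s t i j)ᴴ =
      ((1 + s ^ 2 : ℝ) : ℂ) • (Z.trace • (1 : Matrix (Fin d) (Fin d) ℂ)) + ((2 * s : ℝ) : ℂ) • Zᵀ
        + ((t ^ 2 * d - 2 * t * (1 + s) : ℝ) : ℂ) • Z := by
  have h1 : ∑ i : Fin d, ∑ j : Fin d, Matrix.single i j (1:ℂ) * Z * Matrix.single j i 1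
      = Z.trace • (1 : Matrix (Fin d) (Fin d) ℂ) := by
    ext a b
    simp only [Matrix.sum_apply, single_single_entry]
    simp [Matrix.trace, Matrix.one_apply, Finset.sum_ite_irrel]
  have h1' : ∑ i : Fin d, ∑ j : Fin d, Matrix.single j i (1:ℂ) * Z * Matrix.single i j 1
      = Z.trace • (1 : Matrix (Fin d) (Fin d) ℂ) := by
    rw [Finset.sum_comm, h1]
  have h2 : ∑ i : Fin d, ∑ j : Fin d, Matrix.single i j (1:ℂ) * Z * Matrix.single i j 1
      = Zᵀ := by
    ext a b
    simp only [Matrix.sum_apply, single_single_entry]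
    simp [Finset.sum_ite_irrel]
  have h2' : ∑ i : Fin d, ∑ j : Fin d, Matrix.single j i (1:ℂ) * Z * Matrix.single j i 1
      = Zᵀ := by
    rw [Finset.sum_comm, h2]
  have h3 : ∑ i : Fin d, Matrix.single i i (1:ℂ) = 1 := by
    ext a b
    simp [Matrix.sum_apply, Matrix.single_apply, Matrix.one_apply, ite_and]
  have key : ∀ i j : Fin d, krausOp s t i j * Z * (krausOp s t i j)ᴴ =
      Matrix.single i j (1:ℂ) * Z * Matrix.single j i 1
      + (s:ℂ) • (Matrix.single i j (1:ℂ) * Z * Matrix.single i j 1)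
      + (s:ℂ) • (Matrix.single j i (1:ℂ) * Z * Matrix.single j i 1)
      + ((s:ℂ) * s) • (Matrix.single j i (1:ℂ) * Z * Matrix.single i j 1)
      + (if i = j then ((t:ℂ) * t) • Z - (t * (1 + s) : ℂ) • (Matrix.single i i (1:ℂ) * Z)
          - (t * (1 + s) : ℂ) • (Z * Matrix.single i i (1:ℂ)) else 0) := by
    intro i j
    rw [kraus_conj, krausOp]
    split_ifs with h
    · subst h
      simp only [add_mul, mul_add, sub_mul, mul_sub, Matrix.smul_mul, Matrix.mul_smul, one_mul,
        mul_one, Matrix.one_mul, Matrix.mul_one]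
      module
    · simp only [add_mul, mul_add, zero_smul, sub_zero, Matrix.smul_mul, Matrix.mul_smul]
      module
  simp only [key, Finset.sum_add_distrib, ← Finset.smul_sum, h1, h1', h2, h2',
    Finset.sum_ite_eq, Finset.mem_univ, if_true, Finset.sum_sub_distrib, ← Finset.sum_mul,
    ← Finset.mul_sum, h3, Finset.sum_const, Finset.card_univ, Fintype.card_fin]
  rw [← Nat.cast_smul_eq_nsmul ℂ]
  push_cast
  simp only [one_mul, mul_one]
  module

lemma div_nonneg_iff_pos' {a b : ℝ} (hb : 0 < b) : 0 ≤ a / b ↔ 0 ≤ a := by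
  rw [le_div_iff₀ hb, zero_mul]

lemma Lmap_apply' {d : ℕ} (p q : ℝ) (Z : Matrix (Fin d) (Fin d) ℂ) : Lmap d p q Z =
    (((1 - p - q : ℝ) : ℂ) / (d : ℂ)) • (Z.trace • (1 : Matrix (Fin d) (Fin d) ℂ))
      + (p : ℂ) • Z + (q : ℂ) • Zᵀ := rfl

lemma Lmap_decomp {d : ℕ} (hd : 2 ≤ d) (p q : ℝ) : Lmap d p q =
    ((((1 - p - q) / d - q) / 4 : ℝ) : ℂ) • (∑ i, ∑ j, conjMap (krausOp (d := d) (-1) 0 i j))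
    + ((((1 - p - q) / d + q) / 4 : ℝ) : ℂ) • (∑ i, ∑ j, conjMap (krausOp (d := d) 1 (2 / d) i j))
    + ((p + ((1 - p - q) / d + q) / d : ℝ) : ℂ) • conjMap 1 := by
  have hd0 : (d : ℂ) ≠ 0 := by
    have : d ≠ 0 := by omega
    exact_mod_cast this
  apply LinearMap.ext
  intro Z
  simp only [LinearMap.add_apply, LinearMap.smul_apply, LinearMap.sum_apply, conjMap_apply,
    kraus_sum]
  simp only [Lmap_apply', Matrix.conjTranspose_one, Matrix.one_mul, Matrix.mul_one]
  push_cast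
  match_scalars <;> field_simp <;> ring

lemma choi_psd {d : ℕ} : (Matrix.of fun x y : Fin d × Fin d =>
    if x.1 = x.2 then (if y.1 = y.2 then (1:ℂ) else 0) else 0).PosSemidef := by
  have := Matrix.posSemidef_vecMulVec_self_star (fun x : Fin d × Fin d => if x.1 = x.2 then (1:ℂ) else 0)
  convert this using 1
  ext x y
  simp only [Matrix.vecMulVec_apply, Pi.star_apply, Matrix.of_apply]
  split_ifs <;> simp

lemma choi_entry {d : ℕ} (p q : ℝ) (x y : Fin d × Fin d) :
    idTensor (Lmap d p q) (Matrix.of fun x y : Fin d × Fin d =>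
    if x.1 = x.2 then (if y.1 = y.2 then (1:ℂ) else 0) else 0) x y =
    (((1 - p - q) / d : ℝ) : ℂ) * (if x.1 = y.1 then (if x.2 = y.2 then 1 else 0) else 0)
    + (p : ℂ) * (if x.1 = x.2 then (if y.1 = y.2 then (1:ℂ) else 0) else 0)
    + (q : ℂ) * (if x.1 = y.2 then (if y.1 = x.2 then (1:ℂ) else 0) else 0) := by
  obtain ⟨i, a⟩ := x
  obtain ⟨j, b⟩ := y
  simp only [idTensor, Lmap_apply', Matrix.trace, Matrix.diag, Matrix.of_apply,
    Matrix.add_apply, Matrix.smul_apply, Matrix.transpose_apply, Matrix.one_apply, smul_eq_mul]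
  have : ∑ x : Fin d, (if i = x then (if j = x then (1:ℂ) else 0) else 0)
      = if i = j then 1 else 0 := by
    simp [eq_comm]
  rw [this]
  push_cast
  split_ifs <;> simp

/-- For `d ≥ 2`, the map `L^{(d)}_{p,q}` is completely positive
(i.e. `k`-positive for every `k`) iff `p - (d-1)q ≤ 1`, `p + (d+1)q ≤ 1` and
`(d+1)p + q ≥ -1/(d-1)`. -/
theorem Lmap_completelyPositive_iff {d : ℕ} (hd : 2 ≤ d) (p q : ℝ) :
    (∀ k : ℕ, IsKPositive k (Lmap d p q)) ↔
      (p - ((d : ℝ) - 1) * q ≤ 1 ∧ p + ((d : ℝ) + 1) * q ≤ 1 ∧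
        -(1 / ((d : ℝ) - 1)) ≤ ((d : ℝ) + 1) * p + q) := by
  have hd1 : (1:ℝ) < d := by exact_mod_cast (by omega : 1 < d)
  have hd0 : (0:ℝ) < d := by linarith
  have e1 : (0 ≤ (1 - p - q) / d + q) ↔ p - ((d : ℝ) - 1) * q ≤ 1 := by
    rw [show (1 - p - q) / d + q = (1 - (p - ((d : ℝ) - 1) * q)) / d by field_simp; ring,
      div_nonneg_iff_pos' hd0, sub_nonneg]
  have e2 : (0 ≤ (1 - p - q) / d - q) ↔ p + ((d : ℝ) + 1) * q ≤ 1 := by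
    rw [show (1 - p - q) / d - q = (1 - (p + ((d : ℝ) + 1) * q)) / d by field_simp; ring,
      div_nonneg_iff_pos' hd0, sub_nonneg]
  have e3 : (0 ≤ p + ((1 - p - q) / d + q) / d) ↔
      -(1 / ((d : ℝ) - 1)) ≤ ((d : ℝ) + 1) * p + q := by
    have h : (0:ℝ) < d - 1 := by linarith
    have h2 : (d:ℝ) - 1 ≠ 0 := h.ne'
    rw [show p + ((1 - p - q) / d + q) / d =
      (((d : ℝ) + 1) * p + q - -(1 / ((d : ℝ) - 1))) * (d - 1) / d ^ 2 by field_simp; ring,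
      div_nonneg_iff_pos' (by positivity), mul_nonneg_iff_of_pos_right h, sub_nonneg]
  rw [← e1, ← e2, ← e3]
  constructor
  · intro H
    have Y := H d _ choi_psd
    obtain ⟨n, rfl⟩ : ∃ n, d = n + 2 := ⟨d - 2, by omega⟩
    refine ⟨?_, ?_, ?_⟩
    · have := Y.dotProduct_mulVec_nonneg (Pi.single (0, 1) 1 + Pi.single (1, 0) 1)
      simp [Matrix.mulVec_add, add_dotProduct, dotProduct_add, choi_entry, ← Pi.single_star] at this
      have h2 : (0:ℝ) ≤ (1 - p - q) / (n + 2) + q + (q + (1 - p - q) / (n + 2)) := by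
        exact_mod_cast this
      push_cast
      linarith
    · have := Y.dotProduct_mulVec_nonneg (Pi.single (0, 1) 1 - Pi.single (1, 0) 1)
      simp [Matrix.mulVec_sub, sub_dotProduct, dotProduct_sub, choi_entry, ← Pi.single_star] at this
      have h2 : q ≤ (1 - p - q) / (n + 2) - q + (1 - p - q) / (n + 2) := by
        exact_mod_cast this
      push_cast
      linarith
    · have := Y.dotProduct_mulVec_nonneg (fun x => if x.1 = x.2 then 1 else 0)
      simp [dotProduct, Matrix.mulVec, Fintype.sum_prod_type, choi_entry, Finset.sum_add_distrib] at this
      have h2 : (0:ℝ) ≤ (n + 2) * ((1 - p - q) / (n + 2)) + (n + 2) * ((n + 2) * p)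
          + (n + 2) * q := by
        exact_mod_cast this
      push_cast
      rw [show p + ((1 - p - q) / ((n:ℝ) + 2) + q) / ((n:ℝ) + 2) =
        ((n + 2) * ((1 - p - q) / (n + 2)) + (n + 2) * ((n + 2) * p) + (n + 2) * q)
          / ((n:ℝ) + 2) ^ 2 by field_simp; ring]
      positivity
  · rintro ⟨h1, h2, h3⟩ k
    rw [Lmap_decomp hd]
    refine IsKPositive.add' (IsKPositive.add' ?_ ?_) ?_
    · exact (IsKPositive.sum' _ _ fun i => IsKPositive.sum' _ _ fun j => conjMap_pos k _).smul'
        (by linarith)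
    · exact (IsKPositive.sum' _ _ fun i => IsKPositive.sum' _ _ fun j => conjMap_pos k _).smul'
        (by linarith)
    · exact (conjMap_pos k _).smul' h3

end
end

section
/- Let d ≥ 2 and a, b ∈ ℝ. The operator ρ^{(d)}_{a,b} is separable (i.e. ρ^{(d)}_{a,b} ∈ Sch_1) if and only if −1/(d−1) ≤ (d+1)a + b ≤ 1 and −1/(d−1) ≤ a + (d+1)b ≤ 1. -/
set_option linter.unusedSectionVars false

open Matrix
open scoped ComplexOrder

noncomputable section

namespace RhoSep

/-- Equality pattern function: pairings. -/
def Pc {d : ℕ} (i j k l : Fin d) : ℂ :=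
  if (i = j ∧ k = l) ∨ (i = k ∧ j = l) ∨ (i = l ∧ j = k) then 1 else 0

lemma mem_of_fintype {m n k : ℕ} {ι : Type*} [Fintype ι] (ξ : ι → (Fin m × Fin n → ℂ))
    (h : ∀ i, (Matrix.of fun a b => ξ i (a, b)).rank ≤ k) :
    (∑ i, Matrix.vecMulVec (ξ i) (star (ξ i))) ∈ SchmidtSet m n k := by
  refine ⟨Fintype.card ι, fun i => ξ ((Fintype.equivFin ι).symm i), fun i => h _, ?_⟩
  exact (Equiv.sum_comp (Fintype.equivFin ι).symm
    (fun i => Matrix.vecMulVec (ξ i) (star (ξ i)))).symm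

lemma zero_mem {m n k : ℕ} : (0 : Matrix (Fin m × Fin n) (Fin m × Fin n) ℂ) ∈ SchmidtSet m n k :=
  ⟨0, fun i => i.elim0, fun i => i.elim0, by simp⟩

lemma add_mem {m n k : ℕ} {X Y : Matrix (Fin m × Fin n) (Fin m × Fin n) ℂ}
    (hX : X ∈ SchmidtSet m n k) (hY : Y ∈ SchmidtSet m n k) : X + Y ∈ SchmidtSet m n k := by
  obtain ⟨N, ξ, h, rfl⟩ := hX
  obtain ⟨M, η, h', rfl⟩ := hY
  have := mem_of_fintype (k := k) (Sum.elim ξ η) (by rintro (i | i) <;> simp [h, h'])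
  simpa using this

lemma sum_mem {m n k : ℕ} {ι : Type*} (s : Finset ι)
    (X : ι → Matrix (Fin m × Fin n) (Fin m × Fin n) ℂ)
    (h : ∀ i ∈ s, X i ∈ SchmidtSet m n k) : ∑ i ∈ s, X i ∈ SchmidtSet m n k :=
  Finset.sum_induction X (· ∈ SchmidtSet m n k) (fun _ _ => add_mem) zero_mem h

lemma smul_mem {m n k : ℕ} {X : Matrix (Fin m × Fin n) (Fin m × Fin n) ℂ} {c : ℝ} (hc : 0 ≤ c)
    (hX : X ∈ SchmidtSet m n k) : (c : ℂ) • X ∈ SchmidtSet m n k := by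
  obtain ⟨N, ξ, h, rfl⟩ := hX
  have hs : ((Real.sqrt c : ℝ) : ℂ) * ((Real.sqrt c : ℝ) : ℂ) = c := by
    rw [← Complex.ofReal_mul, Real.mul_self_sqrt hc]
  refine ⟨N, fun i => ((Real.sqrt c : ℝ) : ℂ) • ξ i, fun i => ?_, ?_⟩
  · have : (Matrix.of fun a b => (((Real.sqrt c : ℝ) : ℂ) • ξ i) (a, b))
      = (((Real.sqrt c : ℝ) : ℂ) • (1 : Matrix (Fin m) (Fin m) ℂ)) *
        (Matrix.of fun a b => ξ i (a, b)) := by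
      ext a b; simp
    rw [this]
    exact (Matrix.rank_mul_le_right _ _).trans (h i)
  · rw [Finset.smul_sum]
    refine Finset.sum_congr rfl fun i _ => ?_
    ext p q
    simp only [Matrix.smul_apply, Matrix.vecMulVec_apply, Pi.smul_apply, Pi.star_apply, smul_eq_mul,
      star_mul', ← hs, RCLike.star_def, Complex.conj_ofReal]
    ring

lemma prod_mem {m n : ℕ} (x : Fin m → ℂ) (y : Fin n → ℂ) :
    (Matrix.of fun p q => x p.1 * y p.2 * star (x q.1) * star (y q.2)) ∈ SchmidtSet m n 1 := by
  refine ⟨1, fun _ p => x p.1 * y p.2, fun _ => Matrix.rank_vecMulVec_le x y, ?_⟩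
  ext p q
  simp [Matrix.vecMulVec_apply]; ring

lemma exists_prod {m n : ℕ} (ξ : Fin m × Fin n → ℂ)
    (h : (Matrix.of fun a b => ξ (a, b)).rank ≤ 1) :
    ∃ x : Fin m → ℂ, ∃ y : Fin n → ℂ, ∀ i j, ξ (i, j) = x i * y j := by
  rw [Matrix.rank] at h
  obtain ⟨v, hv⟩ := (finrank_le_one_iff (K := ℂ)).1 h
  choose c hc using fun j : Fin n => hv ⟨(Matrix.of fun a b => ξ (a, b)).mulVecLin (Pi.single j 1), ⟨_, rfl⟩⟩
  refine ⟨v.1, c, fun i j => ?_⟩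
  have := congrFun (congrArg Subtype.val (hc j)) i
  simp at this
  rw [← this]; ring

lemma sign_sum {d : ℕ} (i j k l : Fin d) :
    (∑ s : Fin d → ℤˣ, (((s i * s j * s k * s l : ℤˣ) : ℤ) : ℂ)) = (2 : ℂ) ^ d * Pc i j k l := by
  unfold Pc
  split_ifs with h
  · have : ∀ s : Fin d → ℤˣ, s i * s j * s k * s l = 1 := by
      intro s
      have hs := fun i => Int.units_mul_self (s i)
      rcases h with ⟨rfl, rfl⟩ | ⟨rfl, rfl⟩ | ⟨rfl, rfl⟩
      · rw [hs, one_mul, hs]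
      · rw [mul_right_comm (s i), hs, one_mul, hs]
      · rw [mul_assoc (s i), hs, mul_one, hs]
    simp [this]
  · obtain ⟨t, ht⟩ : ∃ t : Fin d → ℤˣ, t i * t j * t k * t l = -1 := by
      have key : ∃ m : Fin d, (if i = m then (-1 : ℤˣ) else 1) * (if j = m then -1 else 1) *
        (if k = m then -1 else 1) * (if l = m then -1 else 1) = -1 := by
        by_cases h1 : i = j
        · subst h1; refine ⟨k, ?_⟩
          have : l ≠ k := by grind
          simp only [this, if_true, if_false]
          split_ifs <;> simp
        · by_cases h2 : i = k
          · subst h2; refine ⟨j, ?_⟩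
            have : l ≠ j := by grind
            simp [this, h1]
          · refine ⟨if i = l then j else i, ?_⟩
            split_ifs <;> simp_all <;> grind
      obtain ⟨m, hm⟩ := key
      exact ⟨fun i => if i = m then -1 else 1, hm⟩
    have h1 := Equiv.sum_comp (Equiv.mulLeft t)
      (fun s : Fin d → ℤˣ => (((s i * s j * s k * s l : ℤˣ) : ℤ) : ℂ))
    have h2 : ∀ s : Fin d → ℤˣ, ((((t * s) i * (t * s) j * (t * s) k * (t * s) l : ℤˣ) : ℤ) : ℂ)
        = - (((s i * s j * s k * s l : ℤˣ) : ℤ) : ℂ) := by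
      intro s
      have : (t * s) i * (t * s) j * (t * s) k * (t * s) l = - (s i * s j * s k * s l) := by
        simp only [Pi.mul_apply]
        calc _ = (t i * t j * t k * t l) * (s i * s j * s k * s l) := by
              simp only [mul_comm, mul_left_comm]
          _ = _ := by rw [ht]; simp
      rw [this]; push_cast; rfl
    simp only [Equiv.coe_mulLeft, h2, Finset.sum_neg_distrib] at h1
    rw [mul_zero]
    exact self_eq_neg.1 h1.symm

lemma twirl_mem {d : ℕ} (u w : Fin d → ℂ) :
    (Matrix.of fun p q : Fin d × Fin d =>
      Pc p.1 p.2 q.1 q.2 * (u p.1 * w p.2 * star (u q.1) * star (w q.2))) ∈ SchmidtSet d d 1 := by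
  have h := smul_mem (c := ((2 : ℝ) ^ d)⁻¹) (by positivity) (sum_mem Finset.univ
    (fun s : Fin d → ℤˣ => _) (fun s _ => prod_mem (fun i => ((s i : ℤ) : ℂ) * u i)
      (fun i => ((s i : ℤ) : ℂ) * w i)))
  convert h using 1
  ext p q
  have := sign_sum p.1 p.2 q.1 q.2
  simp only [Matrix.smul_apply, Matrix.sum_apply, Matrix.of_apply, smul_eq_mul]
  have e : ∀ s : Fin d → ℤˣ, ((s p.1 : ℤ) : ℂ) * u p.1 * (((s p.2 : ℤ) : ℂ) * w p.2) *
      star (((s q.1 : ℤ) : ℂ) * u q.1) * star (((s q.2 : ℤ) : ℂ) * w q.2)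
      = (((s p.1 * s p.2 * s q.1 * s q.2 : ℤˣ) : ℤ) : ℂ) *
        (u p.1 * w p.2 * star (u q.1) * star (w q.2)) := by
    intro s; simp; ring
  simp only [e, ← Finset.sum_mul, this]
  push_cast
  field_simp

/-- `α I + β W + γ F` where `W` is the unnormalised maximally entangled projector. -/
def gen (d : ℕ) (α β γ : ℂ) : Matrix (Fin d × Fin d) (Fin d × Fin d) ℂ :=
  Matrix.of fun p q => α * (if p.1 = q.1 ∧ p.2 = q.2 then 1 else 0)
    + β * (if p.1 = p.2 ∧ q.1 = q.2 then 1 else 0)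
    + γ * (if p.1 = q.2 ∧ p.2 = q.1 then 1 else 0)

lemma rho_eq_gen (d : ℕ) (a b : ℝ) :
    rho d a b = gen d (((1 - a - b : ℝ) : ℂ) / ((d : ℂ) ^ 2)) ((a : ℂ) / d) ((b : ℂ) / d) := by
  ext ⟨i, j⟩ ⟨k, l⟩
  have hs : ((Real.sqrt d : ℝ) : ℂ)⁻¹ * ((Real.sqrt d : ℝ) : ℂ)⁻¹ = (d : ℂ)⁻¹ := by
    rw [← mul_inv, ← Complex.ofReal_mul, Real.mul_self_sqrt (Nat.cast_nonneg d)]; simp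
  have hw : Matrix.vecMulVec (omegaVec d) (star (omegaVec d)) (i, j) (k, l)
      = (d : ℂ)⁻¹ * (if i = j ∧ k = l then 1 else 0) := by
    by_cases h1 : i = j <;> by_cases h2 : k = l <;>
      simp [Matrix.vecMulVec_apply, omegaVec, h1, h2, hs]
  simp only [rho, gen, Matrix.add_apply, Matrix.smul_apply, hw, flipMatrix, Matrix.of_apply,
    Matrix.one_apply, smul_eq_mul, Prod.mk.injEq]
  ring

/-- Partial transpose on the second factor. -/
def pt {d : ℕ} (X : Matrix (Fin d × Fin d) (Fin d × Fin d) ℂ) :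
    Matrix (Fin d × Fin d) (Fin d × Fin d) ℂ :=
  Matrix.of fun p q => X (p.1, q.2) (q.1, p.2)

lemma pt_mem {d : ℕ} {X : Matrix (Fin d × Fin d) (Fin d × Fin d) ℂ}
    (hX : X ∈ SchmidtSet d d 1) : pt X ∈ SchmidtSet d d 1 := by
  obtain ⟨N, ξ, h, rfl⟩ := hX
  choose x y hxy using fun i => exists_prod (ξ i) (h i)
  have := sum_mem Finset.univ _ (fun i _ => prod_mem (x i) (star (y i)))
  convert this using 1
  ext p q
  simp only [pt, Matrix.of_apply, Matrix.sum_apply, Matrix.vecMulVec_apply, Pi.star_apply, hxy,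
    star_mul', star_star]
  refine Finset.sum_congr rfl fun i _ => by ring

lemma pt_gen {d : ℕ} (α β γ : ℂ) : pt (gen d α β γ) = gen d α γ β := by
  ext ⟨i, j⟩ ⟨k, l⟩
  simp only [pt, gen, Matrix.of_apply, eq_comm (a := l) (b := j), eq_comm (a := l) (b := k), eq_comm (a := k) (b := j)]
  ring

lemma flip_bounds {d : ℕ} {X : Matrix (Fin d × Fin d) (Fin d × Fin d) ℂ}
    (hX : X ∈ SchmidtSet d d 1) :
    0 ≤ ∑ i, ∑ j, X (i, j) (j, i) ∧ ∑ i, ∑ j, X (i, j) (j, i) ≤ ∑ i, ∑ j, X (i, j) (i, j) := by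
  obtain ⟨N, ξ, h, rfl⟩ := hX
  choose x y hxy using fun i => exists_prod (ξ i) (h i)
  simp only [Matrix.sum_apply, Matrix.vecMulVec_apply, Pi.star_apply, hxy, star_mul']
  have sw : ∀ f : Fin d → Fin d → Fin N → ℂ,
      ∑ i, ∑ j, ∑ n, f i j n = ∑ n, ∑ i, ∑ j, f i j n := by
    intro f
    rw [Finset.sum_comm]
    rw [Finset.sum_comm' (t' := Finset.univ) (s' := fun _ => Finset.univ) (by simp)]
    simp_rw [Finset.sum_comm (s := (Finset.univ : Finset (Fin d))) (t := (Finset.univ : Finset (Fin N)))]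
  rw [sw, sw]
  constructor
  · refine Finset.sum_nonneg fun n _ => ?_
    have : ∑ i, ∑ j, x n i * y n j * (star (x n j) * star (y n i))
        = (∑ i, x n i * star (y n i)) * star (∑ i, x n i * star (y n i)) := by
      rw [star_sum, Finset.sum_mul_sum]
      refine Finset.sum_congr rfl fun i _ => Finset.sum_congr rfl fun j _ => ?_
      simp; ring
    rw [this]; exact mul_star_self_nonneg _
  · refine Finset.sum_le_sum fun n _ => ?_
    rw [← sub_nonneg]
    have h0 : 0 ≤ ∑ i, ∑ j, (x n i * y n j - x n j * y n i) * star (x n i * y n j - x n j * y n i) :=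
      Finset.sum_nonneg fun i _ => Finset.sum_nonneg fun j _ => mul_star_self_nonneg _
    have e : ∑ i, ∑ j, (x n i * y n j - x n j * y n i) * star (x n i * y n j - x n j * y n i)
      = 2 * (∑ i, ∑ j, x n i * y n j * (star (x n i) * star (y n j)) -
        ∑ i, ∑ j, x n i * y n j * (star (x n j) * star (y n i))) := by
      have c1 : ∑ i, ∑ j, x n i * y n j * (star (x n i) * star (y n j)) =
        ∑ i, ∑ j, x n j * y n i * (star (x n j) * star (y n i)) := Finset.sum_comm
      have c2 : ∑ i, ∑ j, x n i * y n j * (star (x n j) * star (y n i)) =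
        ∑ i, ∑ j, x n j * y n i * (star (x n i) * star (y n j)) := Finset.sum_comm
      rw [two_mul, sub_add_sub_comm]
      nth_rewrite 2 [c1]
      nth_rewrite 2 [c2]
      simp only [← Finset.sum_add_distrib, ← Finset.sum_sub_distrib]
      refine Finset.sum_congr rfl fun i _ => Finset.sum_congr rfl fun j _ => ?_
      simp; ring
    rw [e] at h0
    have h2 : (0 : ℂ) ≤ 2⁻¹ := by
      rw [show (2⁻¹ : ℂ) = ((2⁻¹ : ℝ) : ℂ) by simp]; exact Complex.zero_le_real.2 (by norm_num)
    have := mul_nonneg h2 h0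
    simpa using this

lemma gen_flip {d : ℕ} (α β γ : ℂ) :
    ∑ i, ∑ j, gen d α β γ (i, j) (j, i) = α * d + β * d + γ * d ^ 2 := by
  have : ∀ i j : Fin d, gen d α β γ (i, j) (j, i) = (α + β) * (if i = j then 1 else 0) + γ := by
    intro i j
    by_cases h : i = j <;> simp [gen, h, eq_comm]
  simp [this, Finset.sum_add_distrib, ← Finset.mul_sum]; ring

lemma gen_trace {d : ℕ} (α β γ : ℂ) :
    ∑ i, ∑ j, gen d α β γ (i, j) (i, j) = α * d ^ 2 + β * d + γ * d := by
  have : ∀ i j : Fin d, gen d α β γ (i, j) (i, j) = (β + γ) * (if i = j then 1 else 0) + α := by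
    intro i j
    by_cases h : i = j <;> simp [gen, h, eq_comm]
    ring
  simp [this, Finset.sum_add_distrib, ← Finset.mul_sum]; ring

lemma rho_flip_bounds {d : ℕ} (hd : 2 ≤ d) (a b : ℝ) (h : rho d a b ∈ SchmidtSet d d 1) :
    -(1 / ((d : ℝ) - 1)) ≤ a + ((d : ℝ) + 1) * b ∧ a + ((d : ℝ) + 1) * b ≤ 1 := by
  rw [rho_eq_gen] at h
  obtain ⟨h1, h2⟩ := flip_bounds h
  rw [gen_flip] at h1 h2
  rw [gen_trace] at h2
  have hd' : (2 : ℝ) ≤ d := by exact_mod_cast hd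
  have r1 : (((1 - a - b : ℝ) : ℂ) / ((d : ℂ) ^ 2)) * d + ((a : ℂ) / d) * d + ((b : ℂ) / d) * d ^ 2
      = (((1 - a - b) / d + a + b * d : ℝ) : ℂ) := by
    have : (d : ℂ) ≠ 0 := by norm_cast; omega
    push_cast; field_simp
  have r2 : (((1 - a - b : ℝ) : ℂ) / ((d : ℂ) ^ 2)) * d ^ 2 + ((a : ℂ) / d) * d + ((b : ℂ) / d) * d
      = ((1 : ℝ) : ℂ) := by
    have : (d : ℂ) ≠ 0 := by norm_cast; omega
    push_cast; field_simp; ring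
  rw [r1] at h1 h2
  rw [r2, Complex.real_le_real] at h2
  rw [Complex.zero_le_real] at h1
  have e : (1 - a - b) / d + a + b * d = (1 + (d - 1) * (a + (d + 1) * b)) / d := by
    field_simp; ring
  rw [e] at h1 h2
  have hd1 : (0 : ℝ) < d - 1 := by linarith
  rw [div_le_one (by linarith)] at h2
  have h1' := (div_nonneg_iff.1 h1).resolve_right (by rintro ⟨-, h⟩; linarith)
  constructor
  · rw [neg_le, ← sub_nonneg]
    have : 1 / ((d : ℝ) - 1) - -(a + (d + 1) * b) = (1 + (d - 1) * (a + (d + 1) * b)) / (d - 1) := by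
      field_simp; ring
    rw [this]; exact div_nonneg h1'.1 hd1.le
  · by_contra hc
    push Not at hc
    nlinarith

/-- corner (1,1) -/
lemma gen11 (d : ℕ) : gen d 1 1 1 ∈ SchmidtSet d d 1 := by
  have h1 := twirl_mem (d := d) 1 1
  have h2 := smul_mem (c := 2) (by norm_num) (sum_mem Finset.univ _
    (fun m _ => prod_mem (Pi.single m 1 : Fin d → ℂ) (Pi.single m 1 : Fin d → ℂ)))
  convert add_mem h1 h2 using 1
  ext ⟨i, j⟩ ⟨k, l⟩
  simp only [gen, Pc, Matrix.add_apply, Matrix.smul_apply, Matrix.sum_apply, Matrix.of_apply,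
    Pi.single_apply, smul_eq_mul]
  by_cases h1 : i = j <;> by_cases h2 : k = l <;> by_cases h3 : i = k <;> by_cases h4 : i = l <;>
    by_cases h5 : j = k <;> by_cases h6 : j = l <;> subst_vars <;>
    simp_all [eq_comm] <;> norm_num

lemma gen_eq {d : ℕ} (α β γ : ℂ) (M : Matrix (Fin d × Fin d) (Fin d × Fin d) ℂ)
    (h0 : ∀ i j k l : Fin d, ¬ ((i = j ∧ k = l) ∨ (i = k ∧ j = l) ∨ (i = l ∧ j = k)) →
      M (i, j) (k, l) = 0)
    (h1 : ∀ i, M (i, i) (i, i) = α + β + γ)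
    (h2 : ∀ i k, i ≠ k → M (i, i) (k, k) = β)
    (h3 : ∀ i j, i ≠ j → M (i, j) (i, j) = α)
    (h4 : ∀ i j, i ≠ j → M (i, j) (j, i) = γ) : gen d α β γ = M := by
  ext ⟨i, j⟩ ⟨k, l⟩
  by_cases h : (i = j ∧ k = l) ∨ (i = k ∧ j = l) ∨ (i = l ∧ j = k)
  · rcases h with ⟨rfl, rfl⟩ | ⟨rfl, rfl⟩ | ⟨rfl, rfl⟩
    · by_cases hik : i = k
      · subst hik; rw [h1]; simp [gen]
      · rw [h2 _ _ hik]; simp [gen, hik]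
    · by_cases hik : i = j
      · subst hik; rw [h1]; simp [gen]
      · rw [h3 _ _ hik]; simp [gen, hik]
    · by_cases hik : i = j
      · subst hik; rw [h1]; simp [gen]
      · rw [h4 _ _ hik]; simp [gen, hik]
  · rw [h0 _ _ _ _ h]
    push Not at h
    simp only [gen, Matrix.of_apply]
    rw [if_neg (by grind), if_neg (by grind), if_neg (by grind)]
    simp

lemma sumS {d : ℕ} (i k : Fin d) :
    ∑ m : Fin d, ∑ n : Fin d, ((if i = m then (1 : ℂ) else 0) - (if i = n then 1 else 0)) *
      ((if k = m then (1 : ℂ) else 0) - (if k = n then 1 else 0)) =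
    2 * d * (if i = k then 1 else 0) - 2 := by
  simp only [sub_mul, mul_sub, Finset.sum_sub_distrib]
  by_cases h : i = k
  · subst h; simp [← Finset.mul_sum, ← Finset.sum_mul]; ring
  · simp [← Finset.mul_sum, ← Finset.sum_mul, h, Ne.symm h]; norm_num

lemma sumQ {d : ℕ} (i k : Fin d) :
    ∑ m : Fin d, ∑ n : Fin d, ((if i = m then (1 : ℂ) else 0) * (if k = n then 1 else 0) +
      (if k = m then (1 : ℂ) else 0) * (if i = n then 1 else 0)) = 2 := by
  simp [Finset.sum_add_distrib, ← Finset.mul_sum]; norm_num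

/-- corner (0,0) -/
lemma gen00 (d : ℕ) : gen d (2 * (d + 1)) (-2) (-2) ∈ SchmidtSet d d 1 := by
  have h1 := sum_mem Finset.univ _ (fun m _ => sum_mem Finset.univ _ (fun n _ =>
    twirl_mem (fun i : Fin d => (if i = m then (1 : ℂ) else 0) + (if i = n then 1 else 0))
      (fun i : Fin d => (if i = m then (1 : ℂ) else 0) - (if i = n then 1 else 0))))
  have h2 := smul_mem (c := 2 * d) (by positivity)
    (sum_mem (Finset.univ : Finset (Fin d)) _ (fun m _ => sum_mem (Finset.univ : Finset (Fin d)) _ (fun n _ =>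
    prod_mem (fun i : Fin d => if m ≠ n ∧ i = m then (1 : ℂ) else 0)
      (fun i : Fin d => if i = n then (1 : ℂ) else 0))))
  convert add_mem h1 h2 using 1
  have hS : ∀ i k : Fin d, ∑ m : Fin d, ∑ n : Fin d,
      (((if i = m then (1 : ℂ) else 0) + (if i = n then 1 else 0)) *
      ((if i = m then (1 : ℂ) else 0) - (if i = n then 1 else 0)) *
      star ((if k = m then (1 : ℂ) else 0) + (if k = n then 1 else 0)) *
      star ((if k = m then (1 : ℂ) else 0) - (if k = n then 1 else 0))) =
      2 * d * (if i = k then 1 else 0) - 2 := by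
    intro i k
    rw [← sumS]
    refine Finset.sum_congr rfl fun m _ => Finset.sum_congr rfl fun n _ => ?_
    split_ifs <;> simp
  have hS' : ∀ i k : Fin d, ∑ m : Fin d, ∑ n : Fin d,
      (((if i = m then (1 : ℂ) else 0) + (if i = n then 1 else 0)) *
      ((if k = m then (1 : ℂ) else 0) - (if k = n then 1 else 0)) *
      star ((if k = m then (1 : ℂ) else 0) + (if k = n then 1 else 0)) *
      star ((if i = m then (1 : ℂ) else 0) - (if i = n then 1 else 0))) =
      2 * d * (if i = k then 1 else 0) - 2 := by
    intro i k
    rw [← sumS]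
    refine Finset.sum_congr rfl fun m _ => Finset.sum_congr rfl fun n _ => ?_
    split_ifs <;> simp
  have hQ : ∀ i k : Fin d, i ≠ k → ∑ m : Fin d, ∑ n : Fin d,
      (((if i = m then (1 : ℂ) else 0) + (if i = n then 1 else 0)) *
      ((if k = m then (1 : ℂ) else 0) - (if k = n then 1 else 0)) *
      star ((if i = m then (1 : ℂ) else 0) + (if i = n then 1 else 0)) *
      star ((if k = m then (1 : ℂ) else 0) - (if k = n then 1 else 0))) = 2 := by
    intro i k hik
    rw [← sumQ i k]
    refine Finset.sum_congr rfl fun m _ => Finset.sum_congr rfl fun n _ => ?_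
    split_ifs <;> first | (exfalso; clear hS hS' h1 h2; grind) | simp
  have hD : ∀ i j k l : Fin d, ∑ m : Fin d, ∑ n : Fin d,
      (if m ≠ n ∧ i = m then (1 : ℂ) else 0) * (if j = n then (1 : ℂ) else 0) *
      star (if m ≠ n ∧ k = m then (1 : ℂ) else 0) * star (if l = n then (1 : ℂ) else 0)
      = if i ≠ j ∧ i = k ∧ j = l then 1 else 0 := by
    intro i j k l
    rw [Finset.sum_eq_single i (fun m _ hm => Finset.sum_eq_zero fun n _ => by
      simp [Ne.symm hm]) (by simp), Finset.sum_eq_single j (fun n _ hn => by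
      simp [Ne.symm hn]) (by simp)]
    by_cases h1 : i = j <;> by_cases h2 : i = k <;> by_cases h3 : j = l <;>
      simp [h1, h2, h3, eq_comm] <;> grind
  refine gen_eq _ _ _ _ ?_ ?_ ?_ ?_ ?_
  · intro i j k l h
    have : ¬ (i ≠ j ∧ i = k ∧ j = l) := by grind
    simp only [Matrix.add_apply, Matrix.smul_apply, Matrix.sum_apply, Matrix.of_apply, hD, Pc,
      if_neg h, if_neg this]
    simp
  · intro i
    simp only [Matrix.add_apply, Matrix.smul_apply, Matrix.sum_apply, Matrix.of_apply, hD, Pc]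
    simp only [true_and, true_or, if_true, one_mul, hS]
    simp; ring
  · intro i k hik
    simp only [Matrix.add_apply, Matrix.smul_apply, Matrix.sum_apply, Matrix.of_apply, hD, Pc]
    simp only [true_and, true_or, if_true, one_mul, hS]
    simp [hik]
  · intro i k hik
    simp only [Matrix.add_apply, Matrix.smul_apply, Matrix.sum_apply, Matrix.of_apply, hD, Pc]
    simp only [true_and, true_or, or_true, if_true, one_mul, hQ i k hik]
    simp [hik]; ring
  · intro i k hik
    simp only [Matrix.add_apply, Matrix.smul_apply, Matrix.sum_apply, Matrix.of_apply, hD, Pc]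
    simp only [true_and, or_true, if_true, one_mul, hS']
    simp [hik]

lemma dft_sum {d : ℕ} (hd : 2 ≤ d) : ∃ u : Fin (d - 1) → Fin d → ℂ,
    (∀ m i, u m i * star (u m i) = 1) ∧
    ∀ i k, i ≠ k → ∑ m, u m i * u m i * star (u m k) * star (u m k) = -1 := by
  have hd0 : 2 * d ≠ 0 := by omega
  obtain ⟨ζ, hζ⟩ : ∃ ζ : ℂ, IsPrimitiveRoot ζ (2 * d) := ⟨_, Complex.isPrimitiveRoot_exp _ hd0⟩
  have hn : ζ * star ζ = 1 := by
    rw [RCLike.star_def, Complex.mul_conj, Complex.normSq_eq_norm_sq,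
      hζ.norm'_eq_one hd0]; simp
  refine ⟨fun m i => ζ ^ ((m.1 + 1) * i.1), fun m i => ?_, fun i k hik => ?_⟩
  · rw [star_pow, ← mul_pow, hn, one_pow]
  · set r : ℂ := ζ ^ (2 * i.1) * star ζ ^ (2 * k.1) with hr
    have hterm : ∀ m : Fin (d - 1), ζ ^ ((m.1 + 1) * i.1) * ζ ^ ((m.1 + 1) * i.1) *
        star (ζ ^ ((m.1 + 1) * k.1)) * star (ζ ^ ((m.1 + 1) * k.1)) = r ^ (m.1 + 1) := by
      intro m
      rw [hr, star_pow, mul_pow, ← pow_mul, ← pow_mul]; ring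
    simp only [hterm]
    have hsd : star ζ ^ (2 * d) = 1 := by rw [← star_pow, hζ.pow_eq_one, star_one]
    have hrd : r ^ d = 1 := by
      rw [hr, mul_pow, ← pow_mul, ← pow_mul, show 2 * i.1 * d = 2 * d * i.1 by ring,
        show 2 * k.1 * d = 2 * d * k.1 by ring, pow_mul, pow_mul (star ζ), hζ.pow_eq_one, hsd]
      simp
    have hr1 : r ≠ 1 := by
      intro h
      have h2 : ζ ^ (2 * i.1) = ζ ^ (2 * k.1) := by
        calc ζ ^ (2 * i.1) = r * ζ ^ (2 * k.1) := by
              rw [hr, mul_assoc, ← mul_pow, mul_comm (star ζ), hn]; simp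
          _ = _ := by rw [h, one_mul]
      have := hζ.pow_inj (by omega) (by omega) h2
      exact hik (Fin.ext (by omega))
    have hg : ∑ m ∈ Finset.range d, r ^ m = 0 := by
      rw [geom_sum_eq hr1, hrd]; simp
    obtain ⟨e, rfl⟩ : ∃ e, d = e + 1 := ⟨d - 1, by omega⟩
    rw [Finset.sum_range_succ'] at hg
    rw [Fin.sum_univ_eq_sum_range (fun m => r ^ (m + 1))]
    simp only [add_tsub_cancel_right]
    simp at hg
    linear_combination hg

set_option maxHeartbeats 2000000 in
/-- corner (1,0) -/
lemma gen10 (d : ℕ) (hd : 2 ≤ d) : gen d (2 * d) (-4) (2 * d) ∈ SchmidtSet d d 1 := by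
  obtain ⟨u, hu1, hu2⟩ := dft_sum hd
  set v : Fin d → Fin d → Fin d → ℂ := fun m n i =>
    if m = n then 0 else (if i = m then (1 : ℂ) else 0) + Complex.I * (if i = n then 1 else 0) with hv
  have h1 := sum_mem Finset.univ _ (fun m _ => sum_mem Finset.univ _ (fun n _ =>
    twirl_mem (v m n) (v m n)))
  have h2 := smul_mem (c := 2) (by positivity)
    (sum_mem (Finset.univ : Finset (Fin (d - 1))) _ (fun m _ => twirl_mem (u m) (u m)))
  convert add_mem h1 h2 using 1
  have hS : ∀ i k : Fin d, ∑ m : Fin d, ∑ n : Fin d,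
      v m n i * v m n i * star (v m n k) * star (v m n k) =
      2 * d * (if i = k then 1 else 0) - 2 := by
    intro i k
    rw [← sumS]
    refine Finset.sum_congr rfl fun m _ => Finset.sum_congr rfl fun n _ => ?_
    simp only [hv]
    split_ifs <;> first | (exfalso; clear h1 h2 hu1 hu2; grind) | simp
  have hQ : ∀ i k : Fin d, i ≠ k → ∑ m : Fin d, ∑ n : Fin d,
      v m n i * v m n k * star (v m n i) * star (v m n k) = 2 := by
    intro i k hik
    rw [← sumQ i k]
    refine Finset.sum_congr rfl fun m _ => Finset.sum_congr rfl fun n _ => ?_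
    simp only [hv]
    split_ifs <;> first | (exfalso; clear h1 h2 hu1 hu2; grind) | simp
  have hQ' : ∀ i k : Fin d, i ≠ k → ∑ m : Fin d, ∑ n : Fin d,
      v m n i * v m n k * star (v m n k) * star (v m n i) = 2 := by
    intro i k hik
    rw [← hQ i k hik]
    refine Finset.sum_congr rfl fun m _ => Finset.sum_congr rfl fun n _ => by ring
  have hu3 : ∀ i k, ∑ m, u m i * u m k * star (u m i) * star (u m k) = d - 1 := by
    intro i k
    have : ∀ m, u m i * u m k * star (u m i) * star (u m k) = 1 := by
      intro m
      calc _ = (u m i * star (u m i)) * (u m k * star (u m k)) := by ring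
        _ = 1 := by rw [hu1, hu1, one_mul]
    rw [Finset.sum_congr rfl fun m _ => this m]
    simp only [Finset.sum_const, Finset.card_univ, Fintype.card_fin, nsmul_eq_mul, mul_one]
    rw [Nat.cast_sub (by omega), Nat.cast_one]
  have hu4 : ∀ i k, ∑ m, u m i * u m k * star (u m k) * star (u m i) = d - 1 := by
    intro i k
    rw [← hu3 i k]
    exact Finset.sum_congr rfl fun m _ => by ring
  refine gen_eq _ _ _ _ ?_ ?_ ?_ ?_ ?_
  · intro i j k l h
    simp only [Matrix.add_apply, Matrix.smul_apply, Matrix.sum_apply, Matrix.of_apply, Pc,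
      if_neg h]
    simp
  · intro i
    simp only [Matrix.add_apply, Matrix.smul_apply, Matrix.sum_apply, Matrix.of_apply, Pc]
    simp only [true_and, true_or, if_true, one_mul, hS, hu3]
    simp; ring
  · intro i k hik
    simp only [Matrix.add_apply, Matrix.smul_apply, Matrix.sum_apply, Matrix.of_apply, Pc]
    simp only [true_and, true_or, if_true, one_mul, hS, hu2 i k hik]
    simp [hik]; norm_num
  · intro i k hik
    simp only [Matrix.add_apply, Matrix.smul_apply, Matrix.sum_apply, Matrix.of_apply, Pc]
    simp only [true_and, true_or, or_true, if_true, one_mul, hQ i k hik, hu3]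
    simp; ring
  · intro i k hik
    simp only [Matrix.add_apply, Matrix.smul_apply, Matrix.sum_apply, Matrix.of_apply, Pc]
    simp only [true_and, or_true, if_true, one_mul, hQ' i k hik, hu4]
    simp; ring

lemma gen_add {d : ℕ} (α β γ α' β' γ' : ℂ) :
    gen d α β γ + gen d α' β' γ' = gen d (α + α') (β + β') (γ + γ') := by
  ext p q; simp only [gen, Matrix.add_apply, Matrix.of_apply]; ring

lemma gen_smul {d : ℕ} (c α β γ : ℂ) :
    c • gen d α β γ = gen d (c * α) (c * β) (c * γ) := by
  ext p q; simp only [gen, Matrix.smul_apply, Matrix.of_apply, smul_eq_mul]; ring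

lemma rho_mem {d : ℕ} (hd : 2 ≤ d) (a b f g : ℝ)
    (hf : d * f = 1 + (d - 1) * (a + (d + 1) * b))
    (hg : d * g = 1 + (d - 1) * ((d + 1) * a + b))
    (hf0 : 0 ≤ f) (hf1 : f ≤ 1) (hg0 : 0 ≤ g) (hg1 : g ≤ 1) :
    rho d a b ∈ SchmidtSet d d 1 := by
  have hd' : (2 : ℝ) ≤ d := by exact_mod_cast hd
  have hd1 : (0 : ℝ) < d - 1 := by linarith
  have k10 := gen10 d hd
  have k01 := pt_mem k10
  rw [pt_gen] at k01
  have hf1' := sub_nonneg.2 hf1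
  have hg1' := sub_nonneg.2 hg1
  have m11 := smul_mem (c := f * g / (d * (d + 2))) (by positivity) (gen11 d)
  have m10 := smul_mem (c := f * (1 - g) / (2 * (d * (d + 2) * (d - 1)))) (by positivity) k10
  have m01 := smul_mem (c := (1 - f) * g / (2 * (d * (d + 2) * (d - 1)))) (by positivity) k01
  have m00 := smul_mem (c := (1 - f) * (1 - g) / (2 * (d * (d + 2) * (d - 1)))) (by positivity)
    (gen00 d)
  have := add_mem (add_mem m11 m10) (add_mem m01 m00)
  simp only [gen_smul, gen_add] at this
  rw [rho_eq_gen]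
  have ea : a = ((d + 1) * (d * g - 1) - (d * f - 1)) / ((d - 1) * (d * (d + 2))) := by
    rw [eq_div_iff (by positivity), hf, hg]; ring
  have eb : b = ((d + 1) * (d * f - 1) - (d * g - 1)) / ((d - 1) * (d * (d + 2))) := by
    rw [eq_div_iff (by positivity), hf, hg]; ring
  have c0 : (d : ℂ) ≠ 0 := by norm_cast; omega
  have c1 : (d : ℂ) - 1 ≠ 0 := by
    have : ((d - 1 : ℝ) : ℂ) ≠ 0 := by exact_mod_cast hd1.ne'
    simpa using this
  have c2 : (d : ℂ) + 2 ≠ 0 := by norm_cast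
  convert this using 1
  rw [ea, eb]
  congr 1 <;> (push_cast; field_simp; ring)

end RhoSep

/-- For `d ≥ 2`, the operator `ρ^{(d)}_{a,b}` is separable
(`ρ^{(d)}_{a,b} ∈ Sch_1`) iff `-1/(d-1) ≤ (d+1)a + b ≤ 1` and `-1/(d-1) ≤ a + (d+1)b ≤ 1`. -/
theorem rho_separable_iff {d : ℕ} (hd : 2 ≤ d) (a b : ℝ) :
    rho d a b ∈ SchmidtSet d d 1 ↔
      (-(1 / ((d : ℝ) - 1)) ≤ ((d : ℝ) + 1) * a + b ∧ ((d : ℝ) + 1) * a + b ≤ 1 ∧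
       -(1 / ((d : ℝ) - 1)) ≤ a + ((d : ℝ) + 1) * b ∧ a + ((d : ℝ) + 1) * b ≤ 1) := by
  constructor
  · intro h
    have h1 := RhoSep.rho_flip_bounds hd a b h
    have h' := RhoSep.pt_mem h
    rw [RhoSep.rho_eq_gen, RhoSep.pt_gen, show (1 - a - b : ℝ) = 1 - b - a by ring,
      ← RhoSep.rho_eq_gen] at h'
    have h2 := RhoSep.rho_flip_bounds hd b a h'
    rw [add_comm b] at h2
    exact ⟨h2.1, h2.2, h1.1, h1.2⟩
  · rintro ⟨h1, h2, h3, h4⟩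
    have hd' : (2 : ℝ) ≤ d := by exact_mod_cast hd
    have hd0 : (0 : ℝ) < d := by linarith
    have hd1 : (0 : ℝ) < d - 1 := by linarith
    have lo : ∀ t : ℝ, -(1 / ((d : ℝ) - 1)) ≤ t → 0 ≤ (1 + (d - 1) * t) / d := by
      intro t ht
      have := mul_le_mul_of_nonneg_left ht hd1.le
      rw [mul_neg, mul_one_div_cancel hd1.ne'] at this
      exact div_nonneg (by linarith) hd0.le
    have hi : ∀ t : ℝ, t ≤ 1 → (1 + (d - 1) * t) / d ≤ 1 := by
      intro t ht
      rw [div_le_one hd0]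
      nlinarith
    exact RhoSep.rho_mem hd a b _ _ (mul_div_cancel₀ _ hd0.ne') (mul_div_cancel₀ _ hd0.ne')
      (lo _ h3) (hi _ h4) (lo _ h1) (hi _ h2)

end
end
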